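/- Let G be a finite group with o(G) < 211/60 (where 211/60 = o(A_5)). Then G is solvable. -/

import Mathlib

/-- The average element order `o(G) = ψ(G)/|G|` of a finite group `G`,
where `ψ(G) = ∑_{x ∈ G} |x|` is the sum of the orders of all elements of `G`. -/
noncomputable def avgOrder (G : Type*) [Group G] [Fintype G] : ℚ :=
  (∑ x : G, (orderOf x : ℚ)) / (Fintype.card G : ℚ)

/-!
Since `o(G ⧸ M) ≤ o(G)`, all proper quotients of a counterexample `G` of minimal order are solvable,
and by Burnside's `p ^ a * q ^ b` theorem a prime `p ≥ 5` divides the order of `G`. Let `A` be a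
maximal elementary abelian `p`-subgroup and sum `5 - |x|` over the cosets `A y`. For `y` outside the
normalizer `N` of `A`, the solutions of `x ^ 3 = 1` in `A y` contain an entire line of the
`𝔽_p`-space `A` as soon as they contain a three-term progression on it; a count of lines in planes
then bounds their density by `r / p`, where `r` is the Roth number of `ℤ/p`. Together with a bound
for the cosets inside `N`, the hypothesis forces the index of `N` to be less than `2 p`. As `N` has
trivial core, `|G|` divides the factorial of this index; hence `|A| = p`, and Sylow's theorem makes
the index `p + 1`. This contradicts the bound for `p ≥ 11`, and sharper bounds inside `N` exclude
`p = 5` (with equality for `A₅`) and `p = 7`.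
-/

namespace AverageOrder

open Finset

section RothNumbers

/-- Exhaustive search certifying a bound on Roth numbers: it checks that a progression-free set of
naturals has at most `m` elements if its elements `≥ n` are those of the list `l`, by branching on
the membership of `n - 1`, `n - 2`, …, `0`. -/
def rothSearch (m : ℕ) : ℕ → List ℕ → Bool
  | 0, l => l.length ≤ m
  | n + 1, l =>
    l.length + (n + 1) ≤ m ||
      (rothSearch m n l && ((l.any fun b => l.any fun c => n + c == b + b) ||
        rothSearch m n (n :: l)))

theorem card_le_of_rothSearch {m : ℕ} {s : Finset ℕ} (hs : ThreeAPFree (s : Set ℕ)) {n : ℕ}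
    {l : List ℕ} (hsearch : rothSearch m n l = true) (hl : ∀ x, x ∈ l ↔ x ∈ s ∧ n ≤ x) :
    #s ≤ m := by
  induction n generalizing l with
  | zero =>
    have hsl : s ⊆ l.toFinset := fun x hx => List.mem_toFinset.2 ((hl x).2 ⟨hx, x.zero_le⟩)
    exact ((card_le_card hsl).trans l.toFinset_card_le).trans (by simpa [rothSearch] using hsearch)
  | succ n ih =>
    simp only [rothSearch, Bool.or_eq_true, Bool.and_eq_true, decide_eq_true_eq] at hsearch
    rcases hsearch with hshort | ⟨hwithout, hwith⟩
    · have hsl : s ⊆ l.toFinset ∪ range (n + 1) := fun x hx => by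
        simp only [mem_union, List.mem_toFinset, hl, mem_range]
        lia
      calc #s ≤ #l.toFinset + #(range (n + 1)) := (card_le_card hsl).trans (card_union_le _ _)
        _ ≤ l.length + (n + 1) := by rw [card_range]; gcongr; exact l.toFinset_card_le
        _ ≤ m := hshort
    by_cases hn : n ∈ s
    · rcases hwith with hprog | hwith
      · simp only [List.any_eq_true, beq_iff_eq, hl] at hprog
        obtain ⟨b, ⟨hb, hnb⟩, c, ⟨hc, -⟩, habc⟩ := hprog
        have : n = b := hs hn hb hc habc
        lia
      · refine ih hwith fun x => ?_
        rw [List.mem_cons, hl]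
        grind
    · refine ih hwithout fun x => ?_
      rw [hl]
      grind

theorem rothNumberNat_le_of_rothSearch {m N : ℕ} (h : rothSearch m N [] = true) :
    rothNumberNat N ≤ m := by
  obtain ⟨s, hsub, hcard, hs⟩ := rothNumberNat_spec N
  rw [← hcard]
  refine card_le_of_rothSearch hs h fun x => ?_
  have : x ∈ s → x < N := fun hx => mem_range.1 (hsub hx)
  grind

theorem rothNumberNat_nineteen_le : rothNumberNat 19 ≤ 8 :=
  rothNumberNat_le_of_rothSearch (by decide +kernel)

/-- The largest size of a subset of `ℤ/n` without nontrivial three-term progressions. -/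
abbrev zmodRothNumber (n : ℕ) [NeZero n] : ℕ := addRothNumber (univ : Finset (ZMod n))

theorem card_le_zmodRothNumber {n : ℕ} [NeZero n] {s : Finset (ZMod n)}
    (hs : ThreeAPFree (s : Set (ZMod n))) : #s ≤ zmodRothNumber n :=
  hs.le_addRothNumber (subset_univ s)

theorem threeAPFree_window {n N : ℕ} (hN : N ≤ 2 * n) {s : Finset (ZMod n)}
    (hs : ThreeAPFree (s : Set (ZMod n))) (a : ZMod n) :
    ThreeAPFree (({j ∈ range N | a + (j : ZMod n) ∈ s} : Finset ℕ) : Set ℕ) := by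
  intro i hi j hj k hk hijk
  simp only [coe_filter, mem_range, Set.mem_ofPred_eq] at hi hj hk
  have hcast : (i : ZMod n) + k = j + j := mod_cast congrArg (Nat.cast (R := ZMod n)) hijk
  have hmod : (i : ZMod n) = j :=
    add_left_cancel (hs hi.2 hj.2 hk.2 (by linear_combination hcast))
  rw [ZMod.natCast_eq_natCast_iff, Nat.modEq_iff_dvd] at hmod
  have hzero := Int.eq_zero_of_abs_lt_dvd hmod (by rw [abs_lt]; lia)
  lia

theorem sum_card_window {n : ℕ} [NeZero n] (N : ℕ) (s : Finset (ZMod n)) :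
    ∑ a, #{j ∈ range N | a + ((j : ℕ) : ZMod n) ∈ s} = N * #s := by
  simp_rw [card_filter]
  rw [sum_comm]
  have hshift (j : ℕ) : ∑ a, (if a + (j : ZMod n) ∈ s then 1 else 0) = #s :=
    (Fintype.sum_equiv (Equiv.addRight (j : ZMod n)) _ (fun b => if b ∈ s then 1 else 0)
      fun _ => rfl).trans (by simp)
  simp_rw [hshift, sum_const, card_range, smul_eq_mul]

theorem mul_zmodRothNumber_le {n N : ℕ} [NeZero n] (hN : N ≤ 2 * n) :
    N * zmodRothNumber n ≤ rothNumberNat N * n := by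
  obtain ⟨s, -, hcard, hs⟩ := addRothNumber_spec (univ : Finset (ZMod n))
  calc N * zmodRothNumber n = ∑ a, #{j ∈ range N | a + ((j : ℕ) : ZMod n) ∈ s} := by
        rw [sum_card_window, hcard]
    _ ≤ ∑ _a : ZMod n, rothNumberNat N :=
        sum_le_sum fun a _ => (threeAPFree_window hN hs a).le_addRothNumber (filter_subset _ _)
    _ = rothNumberNat N * n := by simp [ZMod.card, mul_comm]

theorem nineteen_mul_zmodRothNumber_le {n : ℕ} [NeZero n] (hn : 10 ≤ n) :
    19 * zmodRothNumber n ≤ 8 * n :=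
  (mul_zmodRothNumber_le (by lia)).trans (Nat.mul_le_mul_right n rothNumberNat_nineteen_le)

theorem zmodRothNumber_five : zmodRothNumber 5 = 2 := by decide +kernel

theorem zmodRothNumber_seven : zmodRothNumber 7 = 3 := by decide +kernel

theorem two_le_zmodRothNumber {n : ℕ} [NeZero n] (hn : 3 ≤ n) : 2 ≤ zmodRothNumber n := by
  have : Fact (1 < n) := ⟨by lia⟩
  have h01 : ThreeAPFree (({0, 1} : Finset (ZMod n)) : Set (ZMod n)) := by
    have htwo : (1 + 1 : ZMod n) ≠ 0 := by
      rw [one_add_one_eq_two]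
      exact Ring.two_ne_zero (by rw [ZMod.ringChar_zmod_n]; lia)
    intro a ha b hb c hc
    simp only [coe_insert, coe_singleton, Set.mem_insert_iff, Set.mem_singleton_iff] at ha hb hc
    rcases ha with rfl | rfl <;> rcases hb with rfl | rfl <;> rcases hc with rfl | rfl <;>
      simp [htwo, htwo.symm]
  simpa using card_le_zmodRothNumber h01

theorem eleven_le_of_prime {p : ℕ} (hp : p.Prime) (h5 : 5 ≤ p) (hne5 : p ≠ 5) (hne7 : p ≠ 7) :
    11 ≤ p := by
  by_contra! hlt
  interval_cases p <;> revert hp <;> first | lia | norm_num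

theorem two_mul_zmodRothNumber_lt {p : ℕ} [hp : Fact p.Prime] (h5 : 5 ≤ p) :
    2 * zmodRothNumber p < p := by
  rcases eq_or_ne p 5 with rfl | hne5
  · simp [zmodRothNumber_five]
  rcases eq_or_ne p 7 with rfl | hne7
  · simp [zmodRothNumber_seven]
  have h11 := eleven_le_of_prime hp.out h5 hne5 hne7
  have := nineteen_mul_zmodRothNumber_le (n := p) (by lia)
  lia

end RothNumbers

section PlaneLines

theorem sq_card_le_card_mul_card_collisions {ι κ : Type*} [Fintype ι] [DecidableEq κ]
    {f : ι → κ} {T : Finset κ} (hf : ∀ i, f i ∈ T) :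
    Fintype.card ι ^ 2 ≤ #T * #{z : ι × ι | f z.1 = f z.2} := by
  have hfibers : Fintype.card ι = ∑ t ∈ T, #{i | f i = t} :=
    card_eq_sum_card_fiberwise fun i _ => hf i
  have hpairs : #{z : ι × ι | f z.1 = f z.2} = ∑ t ∈ T, #{i | f i = t} ^ 2 := by
    rw [card_eq_sum_card_fiberwise (f := fun z : ι × ι => f z.1) fun z _ => hf z.1]
    refine sum_congr rfl fun t _ => ?_
    rw [sq, ← card_product]
    congr 1
    ext ⟨i, j⟩
    simp only [mem_filter, mem_univ, true_and, mem_product]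
    grind
  rw [hfibers, hpairs]
  exact sq_sum_le_card_mul_sum_sq

variable {F : Type*} [Field F] [Fintype F] [DecidableEq F]

/-- The pairs of distinct slopes `m ≠ m'` whose lines `t = m s + β m` and `t = m' s + β m'` meet
in the column `s`. -/
def lineCollisions (β : F → F) (s : F) : Finset (F × F) :=
  {z ∈ univ.offDiag | z.1 * s + β z.1 = z.2 * s + β z.2}

theorem sum_card_lineCollisions_le (β : F → F) :
    ∑ s, #(lineCollisions β s) ≤ Fintype.card F * Fintype.card F - Fintype.card F := by
  have hmeet : ∀ z ∈ (univ : Finset F).offDiag,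
      #{s | z.1 * s + β z.1 = z.2 * s + β z.2} ≤ 1 := by
    rintro ⟨m, m'⟩ hz
    have hne : m - m' ≠ 0 := sub_ne_zero.2 (by simpa using hz)
    refine card_le_one.2 fun s hs s' hs' => ?_
    simp only [mem_filter, mem_univ, true_and] at hs hs'
    exact mul_left_cancel₀ hne (by linear_combination hs - hs')
  calc ∑ s, #(lineCollisions β s)
      = ∑ z ∈ (univ : Finset F).offDiag, #{s | z.1 * s + β z.1 = z.2 * s + β z.2} := by
        simp_rw [lineCollisions, card_filter]
        exact sum_comm
    _ ≤ ∑ z ∈ (univ : Finset F).offDiag, 1 := sum_le_sum hmeet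
    _ = _ := by rw [sum_const, smul_eq_mul, mul_one, offDiag_card, card_univ]

theorem card_lt_card_lineCollisions {r : ℕ} (hr : 2 * r < Fintype.card F) {β : F → F} {s : F}
    {T : Finset F} (hT : ∀ m, m * s + β m ∈ T) (hTr : #T ≤ r) :
    Fintype.card F < #(lineCollisions β s) := by
  have hsplit : #{z : F × F | z.1 * s + β z.1 = z.2 * s + β z.2} =
      Fintype.card F + #(lineCollisions β s) := by
    rw [← card_univ (α := F), ← diag_card (univ : Finset F), lineCollisions,
      ← card_union_of_disjoint (disjoint_diag_offDiag _ |>.mono_right (filter_subset _ _))]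
    congr 1
    ext ⟨m, m'⟩
    simp only [mem_filter, mem_univ, true_and, mem_union, mem_diag, mem_offDiag]
    grind
  have hcs := sq_card_le_card_mul_card_collisions hT
  rw [hsplit] at hcs
  nlinarith

variable {r : ℕ} {Z : Finset (F × F)}

theorem exists_line_subset_of_card_lt (hZ : r * Fintype.card F < #Z) {m : F}
    (hline : ∀ β, (∀ s, (s, m * s + β) ∈ Z) ∨ #{s | (s, m * s + β) ∈ Z} ≤ r) :
    ∃ β, ∀ s, (s, m * s + β) ∈ Z := by
  by_contra! hno
  have hcard : #Z = ∑ β, #{s | (s, m * s + β) ∈ Z} := by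
    rw [← card_sigma]
    exact card_bij' (fun z _ => ⟨z.2 - m * z.1, z.1⟩) (fun w _ => (w.2, m * w.2 + w.1))
      (by rintro ⟨s, t⟩ h; simpa using h) (by rintro ⟨β, s⟩ h; simpa using h)
      (by simp) (by simp)
  have hle : #Z ≤ ∑ _β : F, r := hcard.trans_le <| sum_le_sum fun β _ =>
    (hline β).resolve_left fun h => (hno β).elim fun s hs => hs (h s)
  rw [sum_const, card_univ, smul_eq_mul, mul_comm] at hle
  lia

-- A set with more than `r q` points contains a line of every finite slope; these `q` lines have too
-- few intersections to pass through at most `r < q / 2` points of all columns but one.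
theorem card_le_of_line_dichotomy (hr : 2 * r < Fintype.card F)
    (hline : ∀ m β, (∀ s, (s, m * s + β) ∈ Z) ∨ #{s | (s, m * s + β) ∈ Z} ≤ r)
    (hcol : ∀ s, (∀ t, (s, t) ∈ Z) ∨ #{t | (s, t) ∈ Z} ≤ r)
    (huniq : ∀ s s', (∀ t, (s, t) ∈ Z) → (∀ t, (s', t) ∈ Z) → s = s') :
    #Z ≤ r * Fintype.card F := by
  by_contra! hlt
  choose β hβ using fun m => exists_line_subset_of_card_lt hlt (hline m)
  have hmany (s : F) (hs : ¬ ∀ t, (s, t) ∈ Z) : Fintype.card F + 1 ≤ #(lineCollisions β s) :=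
    card_lt_card_lineCollisions hr (fun m => by simpa using hβ m s) ((hcol s).resolve_left hs)
  obtain ⟨s₀, hs₀⟩ : ∃ s₀, ∀ s ≠ s₀, ¬ ∀ t, (s, t) ∈ Z := by
    by_cases hfull : ∃ s₀, ∀ t, (s₀, t) ∈ Z
    · obtain ⟨s₀, hs₀⟩ := hfull
      exact ⟨s₀, fun s hne hs => hne (huniq s s₀ hs hs₀)⟩
    · exact ⟨0, fun s _ hs => hfull ⟨s, hs⟩⟩
  have hlower : (Fintype.card F - 1) * (Fintype.card F + 1) ≤ ∑ s, #(lineCollisions β s) :=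
    calc _ = ∑ s ∈ univ.erase s₀, (Fintype.card F + 1) := by
          rw [sum_const, card_erase_of_mem (mem_univ _), card_univ, smul_eq_mul]
      _ ≤ ∑ s ∈ univ.erase s₀, #(lineCollisions β s) :=
          sum_le_sum fun s hs => hmany s (hs₀ s (ne_of_mem_erase hs))
      _ ≤ _ := sum_le_sum_of_subset (subset_univ _)
  have hupper := hlower.trans (sum_card_lineCollisions_le β)
  obtain ⟨k, hk⟩ := Nat.exists_eq_add_of_lt (Fintype.one_lt_card (α := F))
  rw [hk, ← Nat.sub_one_mul, add_assoc 1 k, Nat.add_sub_cancel_left] at hupper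
  lia

end PlaneLines

section ProgressionClosed

/-- A subset of an abelian group is progression-closed if it contains the forward ray
`a, a + e, a + 2e, …` as soon as it contains `a - e`, `a` and `a + e`. -/
def IsProgressionClosed {V : Type*} [AddCommGroup V] (C : Set V) : Prop :=
  ∀ ⦃a e : V⦄, a - e ∈ C → a ∈ C → a + e ∈ C → ∀ n : ℕ, a + n • e ∈ C

variable {p : ℕ} [hp : Fact p.Prime] {V : Type*} [AddCommGroup V] [Module (ZMod p) V]

theorem IsProgressionClosed.line_subset {C : Set V} (hC : IsProgressionClosed C) {a c : V}
    {k d : ZMod p} (hd : d ≠ 0) (hpred : a + (k - d) • c ∈ C) (hmid : a + k • c ∈ C)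
    (hsucc : a + (k + d) • c ∈ C) (l : ZMod p) : a + l • c ∈ C := by
  have hray := hC (a := a + k • c) (e := d • c) (by rwa [sub_smul, ← add_sub_assoc] at hpred) hmid
    (by rwa [add_smul, ← add_assoc] at hsucc) ((l - k) * d⁻¹).val
  rwa [← Nat.cast_smul_eq_nsmul (ZMod p), ZMod.natCast_zmod_val, smul_smul, mul_assoc,
    inv_mul_cancel₀ hd, mul_one, add_assoc, ← add_smul, add_sub_cancel] at hray

theorem IsProgressionClosed.line_dichotomy {C : Set V} [DecidablePred (· ∈ C)]
    (hC : IsProgressionClosed C) (a c : V) :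
    (∀ k : ZMod p, a + k • c ∈ C) ∨ #{k : ZMod p | a + k • c ∈ C} ≤ zmodRothNumber p := by
  by_cases hfree : ThreeAPFree (({k : ZMod p | a + k • c ∈ C} : Finset (ZMod p)) : Set (ZMod p))
  · exact Or.inr (card_le_zmodRothNumber hfree)
  · left
    simp only [ThreeAPFree, coe_filter, mem_univ, true_and, Set.mem_ofPred_eq] at hfree
    push Not at hfree
    obtain ⟨i, hi, j, hj, k, hk, hijk, hne⟩ := hfree
    refine hC.line_subset (k := j) (d := j - i) (sub_ne_zero.2 hne.symm) ?_ hj ?_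
    · rwa [sub_sub_cancel]
    · rwa [← add_sub_assoc, ← hijk, add_sub_cancel_left]

theorem sum_card_plane [Fintype V] (C : Set V) [DecidablePred (· ∈ C)] (b c : V) :
    ∑ a, #{z : ZMod p × ZMod p | a + z.1 • b + z.2 • c ∈ C} = p ^ 2 * #{a | a ∈ C} := by
  simp_rw [card_filter]
  rw [sum_comm]
  have hshift (z : ZMod p × ZMod p) : ∑ a, (if a + z.1 • b + z.2 • c ∈ C then 1 else 0) =
      ∑ a, if a ∈ C then 1 else 0 :=
    Fintype.sum_equiv (Equiv.addRight (z.1 • b + z.2 • c)) _ _ fun a => by simp [add_assoc]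
  simp_rw [hshift, sum_const, card_univ, Fintype.card_prod, ZMod.card, smul_eq_mul, sq]

theorem IsProgressionClosed.card_le [Finite V] (h5 : 5 ≤ p) {C : Set V}
    (hC : IsProgressionClosed C) {b c : V} (hparallel : ∀ (a : V) (s s' : ZMod p),
      (∀ t : ZMod p, a + s • b + t • c ∈ C) → (∀ t : ZMod p, a + s' • b + t • c ∈ C) → s = s') :
    p * Nat.card C ≤ zmodRothNumber p * Nat.card V := by
  classical
  let _ := Fintype.ofFinite V
  have hplane (a : V) : #{z : ZMod p × ZMod p | a + z.1 • b + z.2 • c ∈ C} ≤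
      zmodRothNumber p * p := by
    have hr : 2 * zmodRothNumber p < Fintype.card (ZMod p) :=
      (two_mul_zmodRothNumber_lt h5).trans_eq (ZMod.card p).symm
    refine (card_le_of_line_dichotomy hr ?_ ?_ ?_).trans_eq (by rw [ZMod.card])
    · intro m β
      have hpoint (s : ZMod p) : a + s • b + (m * s + β) • c = (a + β • c) + s • (b + m • c) := by
        module
      simpa only [mem_filter, mem_univ, true_and, hpoint] using hC.line_dichotomy _ _
    · intro s
      simpa only [mem_filter, mem_univ, true_and] using hC.line_dichotomy (a + s • b) c
    · simpa only [mem_filter, mem_univ, true_and] using hparallel a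
  refine Nat.le_of_mul_le_mul_left ?_ hp.out.pos
  rw [Nat.card_eq_fintype_card, Nat.card_eq_fintype_card, Fintype.card_subtype]
  calc p * (p * #{a | a ∈ C}) = ∑ a, #{z : ZMod p × ZMod p | a + z.1 • b + z.2 • c ∈ C} := by
        rw [sum_card_plane C b c]; ring
    _ ≤ ∑ _a : V, zmodRothNumber p * p := sum_le_sum fun a _ => hplane a
    _ = p * (zmodRothNumber p * Fintype.card V) := by
        rw [sum_const, card_univ, smul_eq_mul]; ring

end ProgressionClosed

section Cubes

variable {G : Type*} [Group G]

theorem mul_pow_three_eq_conj {e x : G} (hx : x ^ 3 = 1) :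
    (e * x) ^ 3 = e * MulAut.conj x⁻¹ (MulAut.conj x⁻¹ e) * MulAut.conj x⁻¹ e := by
  have hinv (z : G) : x⁻¹ * (x⁻¹ * z) = x * z := by
    rw [← mul_assoc, ← mul_inv_rev, inv_eq_of_mul_eq_one_left (b := x * x)]
    rw [← hx, pow_succ', pow_two]
  simp [pow_succ, mul_assoc, hinv]

theorem commute_conj_and_conj_conj_eq {e x : G} (hx : x ^ 3 = 1) (hsucc : (e * x) ^ 3 = 1)
    (hpred : (e⁻¹ * x) ^ 3 = 1) :
    Commute e (MulAut.conj x⁻¹ e) ∧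
      MulAut.conj x⁻¹ (MulAut.conj x⁻¹ e) = e⁻¹ * (MulAut.conj x⁻¹ e)⁻¹ := by
  rw [mul_pow_three_eq_conj hx] at hsucc hpred
  generalize MulAut.conj x⁻¹ = φ at *
  simp only [map_inv] at hpred
  generalize φ (φ e) = v at *
  generalize φ e = u at *
  have hv : v = e⁻¹ * u⁻¹ := by
    rw [eq_inv_mul_iff_mul_eq, eq_inv_iff_mul_eq_one, hsucc]
  have hv' : v = u⁻¹ * e⁻¹ := by
    rw [← mul_inv_rev, ← mul_inv_rev, inv_eq_one] at hpred
    rw [eq_inv_mul_iff_mul_eq, eq_inv_iff_mul_eq_one, mul_assoc, hpred]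
  exact ⟨inv_injective (by rw [mul_inv_rev, mul_inv_rev, ← hv, hv']), hv⟩

theorem pow_mul_pow_three_eq_one {e x : G} (hx : x ^ 3 = 1) (hsucc : (e * x) ^ 3 = 1)
    (hpred : (e⁻¹ * x) ^ 3 = 1) (n : ℕ) : (e ^ n * x) ^ 3 = 1 := by
  obtain ⟨hcomm, hconj⟩ := commute_conj_and_conj_conj_eq hx hsucc hpred
  rw [mul_pow_three_eq_conj hx]
  simp only [map_pow, hconj]
  rw [hcomm.inv_inv.mul_pow, inv_pow, inv_pow, mul_inv_cancel_left, inv_mul_cancel]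

theorem commute_of_parallel_cubes {c d d' y : G} (hd : Commute c d) (hd' : Commute c d')
    (h₀ : (d * y) ^ 3 = 1) (h₁ : (c * (d * y)) ^ 3 = 1) (h₂ : (c⁻¹ * (d * y)) ^ 3 = 1)
    (h₀' : (d' * y) ^ 3 = 1) (h₁' : (c * (d' * y)) ^ 3 = 1) (h₂' : (c⁻¹ * (d' * y)) ^ 3 = 1) :
    Commute (d' * d⁻¹) (y⁻¹ * c * y) := by
  have hconj {d : G} (hd : Commute c d) (h₀ : (d * y) ^ 3 = 1) (h₁ : (c * (d * y)) ^ 3 = 1)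
      (h₂ : (c⁻¹ * (d * y)) ^ 3 = 1) :
      y⁻¹ * (d⁻¹ * (y⁻¹ * c * y) * d) * y = c⁻¹ * (y⁻¹ * c * y)⁻¹ := by
    have hindep : MulAut.conj (d * y)⁻¹ c = y⁻¹ * c * y := by
      simp [mul_assoc, hd.eq]
    have h := (commute_conj_and_conj_conj_eq h₀ h₁ h₂).2
    rw [hindep] at h
    rw [← h]
    simp [mul_assoc]
  have heq : d⁻¹ * (y⁻¹ * c * y) * d = d'⁻¹ * (y⁻¹ * c * y) * d' :=
    mul_left_cancel (mul_right_cancel ((hconj hd h₀ h₁ h₂).trans (hconj hd' h₀' h₁' h₂').symm))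
  generalize y⁻¹ * c * y = w at heq
  calc d' * d⁻¹ * w = d' * (d⁻¹ * w * d) * d⁻¹ := by simp [mul_assoc]
    _ = w * (d' * d⁻¹) := by rw [heq]; simp [mul_assoc]

end Cubes

section ElementaryAbelian

/-- An elementary abelian `p`-subgroup: an abelian subgroup of exponent dividing `p`. -/
structure IsElementaryAbelian {G : Type*} [Group G] (p : ℕ) (A : Subgroup G) : Prop where
  commute : ∀ a ∈ A, ∀ b ∈ A, Commute a b
  pow_eq_one : ∀ a ∈ A, a ^ p = 1

variable {G : Type*} [Group G] {p : ℕ} {A : Subgroup G}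

theorem IsElementaryAbelian.isMulCommutative (hA : IsElementaryAbelian p A) :
    IsMulCommutative A :=
  ⟨⟨fun a b => Subtype.ext (hA.commute a a.2 b b.2)⟩⟩

theorem IsElementaryAbelian.isPGroup (hA : IsElementaryAbelian p A) : IsPGroup p A :=
  fun a => ⟨1, Subtype.ext (by simpa using hA.pow_eq_one a a.2)⟩

theorem isElementaryAbelian_closure {s : Set G} (hcomm : ∀ a ∈ s, ∀ b ∈ s, Commute a b)
    (hpow : ∀ a ∈ s, a ^ p = 1) : IsElementaryAbelian p (Subgroup.closure s) := by
  have := Subgroup.isMulCommutative_closure hcomm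
  have hcomm' : ∀ a ∈ Subgroup.closure s, ∀ b ∈ Subgroup.closure s, Commute a b :=
    fun a ha b hb => setLike_mul_comm ha hb
  refine ⟨hcomm', fun a ha => ?_⟩
  induction ha using Subgroup.closure_induction with
  | mem a ha => exact hpow a ha
  | one => exact one_pow p
  | mul a b ha hb iha ihb => rw [(hcomm' a ha b hb).mul_pow, iha, ihb, one_mul]
  | inv a _ iha => rw [inv_pow, iha, inv_one]

theorem mem_of_maximal (hA : Maximal (IsElementaryAbelian p) A) {g : G} (hg : g ^ p = 1)
    (hcomm : ∀ a ∈ A, Commute a g) : g ∈ A := by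
  have hclosure : IsElementaryAbelian p (Subgroup.closure (insert g (A : Set G))) := by
    refine isElementaryAbelian_closure ?_ ?_
    · rintro a (rfl | ha) b (rfl | hb)
      exacts [.refl _, (hcomm b hb).symm, hcomm a ha, hA.prop.commute a ha b hb]
    · rintro a (rfl | ha)
      exacts [hg, hA.prop.pow_eq_one a ha]
  exact hA.le_of_ge hclosure (fun a ha => Subgroup.subset_closure (Set.mem_insert_of_mem g ha))
    (Subgroup.subset_closure (Set.mem_insert g A))

open scoped IsMulCommutative in
theorem isProgressionClosed_cubes [IsMulCommutative A] (y : G) :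
    IsProgressionClosed {v : Additive A | ((v.toMul : G) * y) ^ 3 = 1} := by
  intro a e hpred hmid hsucc n
  simp only [Set.mem_ofPred_eq, toMul_sub, toMul_add, toMul_nsmul, Subgroup.coe_mul,
    Subgroup.coe_pow, Subgroup.coe_div] at *
  have hcomm : Commute (a.toMul : G) e.toMul := congrArg Subtype.val (mul_comm a.toMul e.toMul)
  rw [(hcomm.pow_right n).eq, mul_assoc]
  rw [div_eq_mul_inv, hcomm.inv_right.eq, mul_assoc] at hpred
  rw [hcomm.eq, mul_assoc] at hsucc
  exact pow_mul_pow_three_eq_one hmid hsucc hpred n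

variable [hp : Fact p.Prime]

open scoped IsMulCommutative in
theorem IsElementaryAbelian.card_cubes_le [Finite A] (hA : IsElementaryAbelian p A)
    (h5 : 5 ≤ p) {y b c : G} (hb : b ∈ A) (hc : c ∈ A) (hbc : ¬ Commute b (y⁻¹ * c * y)) :
    p * Nat.card {a : A // ((a : G) * y) ^ 3 = 1} ≤ zmodRothNumber p * Nat.card A := by
  have := hA.isMulCommutative
  let _ : Module (ZMod p) (Additive A) :=
    AddCommGroup.zmodModule fun v => Subtype.ext (hA.pow_eq_one v.toMul v.toMul.2)
  let b' : Additive A := .ofMul ⟨b, hb⟩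
  let c' : Additive A := .ofMul ⟨c, hc⟩
  have hcomm (v : Additive A) : Commute c (v.toMul : G) := hA.commute c hc _ v.toMul.2
  refine (isProgressionClosed_cubes y).card_le (V := Additive A) (b := b') (c := c') h5 ?_
  intro a s s' hs hs'
  by_contra hne
  have hpow : ((s - s')⁻¹.val : ℕ) • ((a + s • b') - (a + s' • b')) = b' := by
    rw [← Nat.cast_smul_eq_nsmul (ZMod p), ZMod.natCast_zmod_val, add_sub_add_left_eq_sub,
      ← sub_smul, inv_smul_smul₀ (sub_ne_zero.2 hne)]
  have hline {v : Additive A} (hv : ∀ t : ZMod p, (((v + t • c').toMul : G) * y) ^ 3 = 1) :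
      ((v.toMul : G) * y) ^ 3 = 1 ∧ (c * (v.toMul * y)) ^ 3 = 1 ∧
        (c⁻¹ * (v.toMul * y)) ^ 3 = 1 :=
    ⟨by simpa using hv 0, by simpa [(hcomm v).eq, ← mul_assoc, c'] using hv 1,
      by simpa [(hcomm v).inv_left.eq, ← mul_assoc, c'] using hv (-1)⟩
  obtain ⟨h₀, h₁, h₂⟩ := hline hs'
  obtain ⟨h₀', h₁', h₂'⟩ := hline hs
  have hdiff := commute_of_parallel_cubes (hcomm _) (hcomm _) h₀ h₁ h₂ h₀' h₁' h₂'
  have hpow' := congrArg (fun v : Additive A => (v.toMul : G)) hpow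
  refine hbc (Eq.subst (motive := fun g => Commute g (y⁻¹ * c * y)) hpow' ?_)
  simpa only [toMul_nsmul, toMul_sub, div_eq_mul_inv, Subgroup.coe_pow, Subgroup.coe_mul,
    Subgroup.coe_inv] using hdiff.pow_left (s - s')⁻¹.val

end ElementaryAbelian

section Inverts

open Subgroup (normalizer centralizer)

variable {G : Type*} [Group G] {p : ℕ} {A : Subgroup G}

/-- The element `y` acts on the subgroup `A` by inversion under conjugation. -/
def Inverts (A : Subgroup G) (y : G) : Prop :=
  ∀ a ∈ A, y * a * y⁻¹ = a⁻¹

theorem Inverts.mem_normalizer {y : G} (hy : Inverts A y) : y ∈ normalizer (A : Set G) := by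
  refine Subgroup.mem_normalizer_iff.2 fun a => ⟨fun ha => hy a ha ▸ A.inv_mem ha, fun ha => ?_⟩
  have hconj := (hy _ (A.inv_mem ha)).trans (inv_inv _)
  rw [mul_left_inj, mul_right_inj] at hconj
  exact hconj ▸ A.inv_mem ha

theorem IsElementaryAbelian.le_centralizer (hA : IsElementaryAbelian p A) :
    A ≤ centralizer (A : Set G) :=
  fun a ha => Subgroup.mem_centralizer_iff.2 fun b hb => hA.commute b hb a ha

theorem IsElementaryAbelian.inverts_of_inverts_mul (hA : IsElementaryAbelian p A) {a y : G}
    (ha : a ∈ A) (h : Inverts A (a * y)) : Inverts A y := by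
  intro b hb
  calc y * b * y⁻¹ = a⁻¹ * (a * y * b * (a * y)⁻¹) * a := by simp [mul_assoc]
    _ = b⁻¹ := by
      rw [h b hb, mul_assoc, (hA.commute _ (A.inv_mem hb) a ha).eq, inv_mul_cancel_left]

theorem IsElementaryAbelian.orderOf_eq [Fact p.Prime] (hA : IsElementaryAbelian p A) {a : G}
    (ha : a ∈ A) (h1 : a ≠ 1) : orderOf a = p :=
  orderOf_eq_prime (hA.pow_eq_one a ha) h1

theorem IsElementaryAbelian.eq_one_of_sq_eq_one [hp : Fact p.Prime]
    (hA : IsElementaryAbelian p A) (hp2 : p ≠ 2) {a : G} (ha : a ∈ A) (hsq : a ^ 2 = 1) :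
    a = 1 := by
  by_contra h1
  have hdvd := orderOf_dvd_of_pow_eq_one hsq
  rw [hA.orderOf_eq ha h1] at hdvd
  exact hp2 ((Nat.prime_dvd_prime_iff_eq hp.out Nat.prime_two).1 hdvd)

theorem IsElementaryAbelian.dvd_orderOf_mul_or_eq [hp : Fact p.Prime]
    (hA : IsElementaryAbelian p A) {a b y : G} (ha : a ∈ A) (hb : b ∈ A)
    (hy : y ∈ centralizer (A : Set G)) :
    p ∣ orderOf (a * y) ∨ p ∣ orderOf (b * y) ∨ a = b := by
  by_cases hab : a * b⁻¹ = 1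
  · exact Or.inr (Or.inr (mul_inv_eq_one.1 hab))
  have hcomm {c : G} (hc : c ∈ A) : Commute c y := Subgroup.mem_centralizer_iff.1 hy c hc
  have hdvd : orderOf (a * y * (b * y)⁻¹) ∣ orderOf (a * y) * orderOf (b * y)⁻¹ :=
    (((hA.commute a ha b hb).mul_right (hcomm ha)).mul_left
      ((hcomm hb).symm.mul_right (.refl y))).inv_right.orderOf_mul_dvd_mul_orderOf
  have hdiff : a * y * (b * y)⁻¹ = a * b⁻¹ := by simp [mul_assoc]
  rw [hdiff, hA.orderOf_eq (A.mul_mem ha (A.inv_mem hb)) hab, orderOf_inv] at hdvd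
  exact (hp.out.dvd_mul.1 hdvd).imp_right Or.inl

theorem exists_not_commute_of_notMem_normalizer [Finite G]
    (hA : Maximal (IsElementaryAbelian p) A) {y : G} (hy : y ∉ normalizer (A : Set G)) :
    ∃ b ∈ A, ∃ c ∈ A, ¬ Commute b (y⁻¹ * c * y) := by
  contrapose! hy
  have hconj : ∀ c ∈ A, y⁻¹ * c * y⁻¹⁻¹ ∈ A := fun c hc =>
    mem_of_maximal hA (by rw [conj_pow, hA.prop.pow_eq_one c hc]; simp) fun b hb => by
      simpa using hy b hb c hc
  exact inv_mem_iff.1 (Subgroup.mem_normalizer_fintype hconj)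

theorem Inverts.notMem_centralizer [Fact p.Prime] {y : G} (hy : Inverts A y)
    (hA : IsElementaryAbelian p A) (hp2 : p ≠ 2) (hbot : A ≠ ⊥) :
    y ∉ centralizer (A : Set G) := by
  intro hyC
  refine hbot ((Subgroup.eq_bot_iff_forall _).2 fun a ha => hA.eq_one_of_sq_eq_one hp2 ha ?_)
  have hinv := hy a ha
  rw [← Subgroup.mem_centralizer_iff.1 hyC a ha, mul_inv_cancel_right] at hinv
  rwa [sq, ← eq_inv_iff_mul_eq_one]

theorem card_inverts_le [Finite G] (A : Subgroup G) :
    Nat.card {y // Inverts A y} ≤ Nat.card (centralizer (A : Set G)) := by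
  rcases isEmpty_or_nonempty {y // Inverts A y} with _ | ⟨⟨z, hz⟩⟩
  · simp
  refine Nat.card_le_card_of_injective (fun y => ⟨z⁻¹ * y, ?_⟩) fun y y' h => ?_
  · refine Subgroup.mem_centralizer_iff.2 fun a ha => ?_
    have h : z * a * z⁻¹ = y * a * (y : G)⁻¹ := (hz a ha).trans (y.2 a ha).symm
    calc a * (z⁻¹ * y) = z⁻¹ * (z * a * z⁻¹) * y := by simp [mul_assoc]
      _ = z⁻¹ * y * a := by simp [h, mul_assoc]
  · exact Subtype.ext (mul_left_cancel (congrArg Subtype.val h))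

theorem card_centralizer_add_card_inverts_le [Finite G] [Fact p.Prime]
    (hA : IsElementaryAbelian p A) (hp2 : p ≠ 2) (hbot : A ≠ ⊥) :
    Nat.card (centralizer (A : Set G)) + Nat.card {y // Inverts A y} ≤
      Nat.card (normalizer (A : Set G)) := by
  have hdisj : Disjoint (centralizer (A : Set G) : Set G) {y | Inverts A y} :=
    Set.disjoint_left.2 fun y hyC hy => hy.notMem_centralizer hA hp2 hbot hyC
  change Nat.card (centralizer (A : Set G) : Set G) + Nat.card {y | Inverts A y} ≤
    Nat.card (normalizer (A : Set G) : Set G)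
  rw [Nat.card_coe_set_eq, Nat.card_coe_set_eq, Nat.card_coe_set_eq, ← Set.ncard_union_eq hdisj]
  exact Set.ncard_le_ncard
    (Set.union_subset (Subgroup.centralizer_le_normalizer _) fun y hy => hy.mem_normalizer)

open scoped IsMulCommutative in
theorem IsElementaryAbelian.mul_card_inverted_le [Finite A] [hp : Fact p.Prime]
    (hA : IsElementaryAbelian p A) {z : G} (hz : ¬ Inverts A z) :
    p * Nat.card {a : A // z * a * z⁻¹ = (a : G)⁻¹} ≤ Nat.card A := by
  have := hA.isMulCommutative
  let I : Subgroup A :=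
    ((MulAut.conj z).toMonoidHom.comp A.subtype).eqLocus (A.subtype.comp invMonoidHom)
  change p * Nat.card I ≤ Nat.card A
  have hindex : I.index ≠ 1 := by
    rw [Ne, Subgroup.index_eq_one]
    intro htop
    exact hz fun a ha => (htop ▸ Subgroup.mem_top _ : (⟨a, ha⟩ : A) ∈ I)
  have hdvd : p ∣ I.index := by
    obtain ⟨k, hk⟩ := hA.isPGroup.index I
    rw [hk] at hindex ⊢
    exact dvd_pow_self p fun h0 => hindex (by simp [h0])
  calc p * Nat.card I ≤ I.index * Nat.card I :=
        Nat.mul_le_mul_right _ (Nat.le_of_dvd (Nat.pos_of_ne_zero I.index_ne_zero_of_finite) hdvd)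
    _ = Nat.card A := I.index_mul_card

theorem orderOf_sq_mul_eq {a z : G} (hz : z ^ 2 = 1) (h3 : (a * z) ^ 3 = 1) :
    orderOf (a ^ 2 * z) = orderOf a := by
  have hzinv : z⁻¹ = z := inv_eq_of_mul_eq_one_right (by rw [← sq, hz])
  have hcube : a * z * a * z * a * z = 1 := by simpa [pow_succ, ← mul_assoc] using h3
  have hconj : a ^ 2 * z = (a * z) * a⁻¹ * (a * z)⁻¹ := by
    rw [eq_mul_inv_iff_mul_eq, eq_mul_inv_iff_mul_eq]
    calc a ^ 2 * z * (a * z) * a = a * (a * z * a * z * a * z) * z⁻¹ := by simp [sq, mul_assoc]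
      _ = a * z := by rw [hcube, hzinv, mul_one]
  rw [hconj, ← orderOf_inv a]
  exact MulEquiv.orderOf_eq (MulAut.conj (a * z)) a⁻¹

end Inverts

section Deficit

theorem sum_ite_eq_mul_card {α : Type*} {P : α → Prop} [DecidablePred P] {s : Finset α}
    (hs : ∀ a, P a → a ∈ s) (k : ℤ) :
    ∑ a ∈ s, (if P a then k else 0) = k * Nat.card {a // P a} := by
  rw [← sum_filter, sum_const, nsmul_eq_mul, mul_comm, Nat.subtype_card (s.filter P) (by grind)]

theorem mul_ne_one_of_notMem {G : Type*} [Group G] {A : Subgroup G} {y : G} (hy : y ∉ A) {a : G}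
    (ha : a ∈ A) : a * y ≠ 1 :=
  fun h => hy (eq_inv_of_mul_eq_one_right h ▸ A.inv_mem ha)

open Subgroup (normalizer centralizer)

variable {G : Type*} [Group G] {p : ℕ} {A : Subgroup G}

/-- How far the order of `x` lies below `5`; negative for elements of order greater than `5`. -/
noncomputable def deficit (x : G) : ℤ :=
  5 - orderOf x

theorem deficit_le_four [Finite G] (x : G) : deficit x ≤ 4 := by
  have := orderOf_pos x
  unfold deficit
  lia

theorem deficit_le_three [Finite G] {x : G} (h1 : x ≠ 1) : deficit x ≤ 3 := by
  have := orderOf_pos x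
  have := mt orderOf_eq_one_iff.1 h1
  unfold deficit
  lia

theorem deficit_le_two [Finite G] {x : G} (h2 : x ^ 2 ≠ 1) : deficit x ≤ 2 := by
  have h1 : x ≠ 1 := by rintro rfl; simp at h2
  have := deficit_le_three h1
  have : orderOf x ≠ 2 := fun h => h2 (h ▸ pow_orderOf_eq_one x)
  unfold deficit at *
  lia

theorem deficit_le_one [Finite G] {x : G} (h2 : x ^ 2 ≠ 1) (h3 : x ^ 3 ≠ 1) : deficit x ≤ 1 := by
  have := deficit_le_two h2
  have : orderOf x ≠ 3 := fun h => h3 (h ▸ pow_orderOf_eq_one x)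
  unfold deficit at *
  lia

theorem IsElementaryAbelian.card_cubes_le_card_five_le_orderOf [Finite A] [Fact p.Prime]
    (hA : IsElementaryAbelian p A) (h5 : 5 ≤ p) {z : G} (hz : z ^ 2 = 1) (hzA : z ∉ A) :
    Nat.card {a : A // ((a : G) * z) ^ 3 = 1} ≤ Nat.card {a : A // 5 ≤ orderOf ((a : G) * z)} := by
  refine Nat.card_le_card_of_injective (fun a => ⟨a.1 ^ 2, ?_⟩) fun a b hab => ?_
  · rw [Subgroup.coe_pow, orderOf_sq_mul_eq hz a.2, hA.orderOf_eq a.1.2]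
    · exact h5
    · intro h1
      have hz3 : z ^ 3 = 1 := by simpa [h1] using a.2
      rw [pow_succ, hz, one_mul] at hz3
      exact hzA (hz3 ▸ A.one_mem)
  · have hsq : (a.1 : G) ^ 2 = (b.1 : G) ^ 2 := congrArg (fun c => ((c.1 : A) : G)) hab
    have hcomm : Commute (a.1 : G) (b.1 : G)⁻¹ := (hA.commute _ a.1.2 _ b.1.2).inv_right
    have hone := hA.eq_one_of_sq_eq_one (by lia) (A.mul_mem a.1.2 (A.inv_mem b.1.2))
      (by rw [hcomm.mul_pow, inv_pow, hsq, mul_inv_cancel])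
    exact Subtype.ext (Subtype.ext (mul_inv_eq_one.1 hone))

variable [Fintype G]

open scoped Classical in
/-- The total deficit of the elements of the coset `A y`. -/
noncomputable def cosetDeficit (A : Subgroup G) (y : G) : ℤ :=
  ∑ a : A, deficit ((a : G) * y)

open scoped Classical in
/-- The total deficit of the elements of the normalizer of `A`. -/
noncomputable def normalizerDeficit (A : Subgroup G) : ℤ :=
  ∑ y with y ∈ normalizer (A : Set G), deficit y

theorem cosetDeficit_mul_left {b : G} (hb : b ∈ A) (y : G) :
    cosetDeficit A (b * y) = cosetDeficit A y := by
  classical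
  exact Fintype.sum_equiv (Equiv.mulRight (⟨b, hb⟩ : A)) _ _ fun a => by simp [mul_assoc]

theorem sum_cosetDeficit {P : G → Prop} [DecidablePred P]
    (hP : ∀ a ∈ A, ∀ y, P (a * y) ↔ P y) :
    ∑ y with P y, cosetDeficit A y = Nat.card A * ∑ y with P y, deficit y := by
  classical
  have htranslate (a : A) : ∑ y with P y, deficit ((a : G) * y) = ∑ y with P y, deficit y :=
    Finset.sum_equiv (Equiv.mulLeft (a : G)) (by simp [hP a a.2]) (by simp)
  simp only [cosetDeficit]
  rw [sum_comm, sum_congr rfl fun a _ => htranslate a, sum_const, card_univ, nsmul_eq_mul,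
    Nat.card_eq_fintype_card]

theorem cosetDeficit_le_mul_card {y : G} {k : ℤ} (h : ∀ a ∈ A, deficit (a * y) ≤ k) :
    cosetDeficit A y ≤ k * Nat.card A := by
  classical
  have hsum := sum_le_card_nsmul univ (fun a : A => deficit ((a : G) * y)) k fun a _ => h a a.2
  rwa [card_univ, ← Nat.card_eq_fintype_card, nsmul_eq_mul, mul_comm] at hsum

theorem cosetDeficit_le_three_mul_card {y : G} (hy : y ∉ A) :
    cosetDeficit A y ≤ 3 * Nat.card A :=
  cosetDeficit_le_mul_card fun _ ha => deficit_le_three (mul_ne_one_of_notMem hy ha)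

theorem cosetDeficit_le_card_add_card_cubes {y : G} (h2 : ∀ a ∈ A, (a * y) ^ 2 ≠ 1) :
    cosetDeficit A y ≤ Nat.card A + Nat.card {a : A // ((a : G) * y) ^ 3 = 1} := by
  classical
  have hpoint (a : A) :
      deficit ((a : G) * y) ≤ 1 + if ((a : G) * y) ^ 3 = 1 then 1 else 0 := by
    split_ifs with h3
    · exact deficit_le_two (h2 a a.2)
    · simpa using deficit_le_one (h2 a a.2) h3
  refine (sum_le_sum fun a _ => hpoint a).trans_eq ?_
  rw [sum_add_distrib, sum_ite_eq_mul_card fun a _ => mem_univ a, one_mul, sum_const, card_univ,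
    nsmul_one, ← Nat.card_eq_fintype_card]

theorem IsElementaryAbelian.cosetDeficit_le_of_sq_eq_one [Fact p.Prime]
    (hA : IsElementaryAbelian p A) (h5 : 5 ≤ p) {z : G} (hz : z ^ 2 = 1) (hzA : z ∉ A) :
    cosetDeficit A z ≤ Nat.card A + 2 * Nat.card {a : A // z * a * z⁻¹ = (a : G)⁻¹} := by
  classical
  have hinverted {a : A} (hsq : ((a : G) * z) ^ 2 = 1) : z * a * z⁻¹ = (a : G)⁻¹ := by
    have hzinv : z⁻¹ = z := inv_eq_of_mul_eq_one_right (by rw [← sq, hz])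
    rw [hzinv, eq_inv_iff_mul_eq_one, mul_eq_one_comm, ← hsq, sq]
    simp only [mul_assoc]
  have hpoint (a : A) : deficit ((a : G) * z) ≤
      1 + 2 * (if z * a * z⁻¹ = (a : G)⁻¹ then 1 else 0) +
        ((if ((a : G) * z) ^ 3 = 1 then 1 else 0) -
          if 5 ≤ orderOf ((a : G) * z) then 1 else 0) := by
    have h1 := deficit_le_three (mul_ne_one_of_notMem hzA a.2)
    have h2 := deficit_le_two (x := (a : G) * z)
    have h3 := deficit_le_one (x := (a : G) * z)
    have hinv := hinverted (a := a)
    have horder := orderOf_le_of_pow_eq_one (x := (a : G) * z) (n := 3) (by norm_num)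
    unfold deficit at *
    split_ifs <;> grind
  have hcubes := hA.card_cubes_le_card_five_le_orderOf h5 hz hzA
  have hsum := sum_le_sum fun a (_ : a ∈ univ) => hpoint a
  simp only [sum_add_distrib, sum_sub_distrib, ← mul_sum, sum_ite_eq_mul_card fun a _ => mem_univ a,
    sum_const, card_univ, nsmul_one, ← Nat.card_eq_fintype_card] at hsum
  unfold cosetDeficit
  lia

end Deficit

section CosetBounds

open Subgroup (normalizer centralizer)

variable {G : Type*} [Group G] [Fintype G] {p : ℕ} [hp : Fact p.Prime] {A : Subgroup G}

theorem IsElementaryAbelian.mul_cosetDeficit_le_or_inverts (hA : IsElementaryAbelian p A)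
    (h5 : 5 ≤ p) {a y : G} (ha : a ∈ A) (hsq : (a * y) ^ 2 = 1) (hy : y ∉ A) :
    p * cosetDeficit A y ≤ (p + 2) * Nat.card A ∨ Inverts A y := by
  refine or_iff_not_imp_right.2 fun hinv => ?_
  have hyA : a * y ∉ A := fun h => hy ((A.mul_mem_cancel_left ha).1 h)
  have hcoset := hA.cosetDeficit_le_of_sq_eq_one h5 hsq hyA
  have hinverted := hA.mul_card_inverted_le (mt (hA.inverts_of_inverts_mul ha) hinv)
  rw [cosetDeficit_mul_left ha] at hcoset
  zify at hinverted
  nlinarith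

theorem IsElementaryAbelian.cosetDeficit_le_two_mul_card (hA : IsElementaryAbelian p A)
    (h5 : 5 ≤ p) {y : G} (hyC : y ∉ centralizer (A : Set G)) (hinv : ¬ Inverts A y) :
    cosetDeficit A y ≤ 2 * Nat.card A := by
  by_cases hsq : ∃ a ∈ A, (a * y) ^ 2 = 1
  · obtain ⟨a, ha, hsq⟩ := hsq
    have hbound := (hA.mul_cosetDeficit_le_or_inverts h5 ha hsq
      fun hy => hyC (hA.le_centralizer hy)).resolve_right hinv
    refine le_of_mul_le_mul_left (hbound.trans ?_) (Nat.cast_pos.2 hp.out.pos)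
    have : (5 : ℤ) ≤ p := mod_cast h5
    nlinarith
  · push Not at hsq
    exact cosetDeficit_le_mul_card fun a ha => deficit_le_two (hsq a ha)

theorem IsElementaryAbelian.cosetDeficit_le_of_mem_centralizer (hA : IsElementaryAbelian p A)
    {y : G} (hy : y ∈ centralizer (A : Set G)) :
    cosetDeficit A y ≤ 4 + (Nat.card A - 1) * (5 - p) := by
  classical
  have hdeficit {a : A} (ha : p ∣ orderOf ((a : G) * y)) : deficit ((a : G) * y) ≤ 5 - p := by
    have := Nat.le_of_dvd (orderOf_pos _) ha
    unfold deficit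
    lia
  obtain ⟨b, hb⟩ : ∃ b : A, ∀ a ≠ b, p ∣ orderOf ((a : G) * y) := by
    by_cases hall : ∀ a : A, p ∣ orderOf ((a : G) * y)
    · exact ⟨1, fun a _ => hall a⟩
    · push Not at hall
      obtain ⟨b, hb⟩ := hall
      refine ⟨b, fun a hab => (hA.dvd_orderOf_mul_or_eq a.2 b.2 hy).resolve_right ?_⟩
      exact not_or.2 ⟨hb, fun h => hab (Subtype.ext h)⟩
  have hrest := sum_le_card_nsmul (univ.erase b) (fun a : A => deficit ((a : G) * y)) (5 - p)
    fun a ha => hdeficit (hb a (ne_of_mem_erase ha))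
  rw [card_erase_of_mem (mem_univ b), card_univ, nsmul_eq_mul,
    Nat.cast_sub Fintype.card_pos, ← Nat.card_eq_fintype_card] at hrest
  rw [cosetDeficit, ← add_sum_erase _ _ (mem_univ b)]
  exact add_le_add (deficit_le_four _) (mod_cast hrest)

theorem mul_cosetDeficit_le_of_notMem_normalizer (hA : Maximal (IsElementaryAbelian p) A)
    (h5 : 5 ≤ p) {y : G} (hy : y ∉ normalizer (A : Set G)) :
    p * cosetDeficit A y ≤ (p + zmodRothNumber p) * Nat.card A := by
  obtain ⟨b, hb, c, hc, hbc⟩ := exists_not_commute_of_notMem_normalizer hA hy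
  by_cases hsq : ∃ a ∈ A, (a * y) ^ 2 = 1
  · obtain ⟨a, ha, hsq⟩ := hsq
    have hbound := (hA.prop.mul_cosetDeficit_le_or_inverts h5 ha hsq
      fun hyA => hy (Subgroup.le_normalizer hyA)).resolve_right fun h => hy h.mem_normalizer
    have hroth : (2 : ℤ) ≤ zmodRothNumber p := mod_cast two_le_zmodRothNumber (by lia)
    exact hbound.trans (by gcongr)
  · push Not at hsq
    have hcubes := hA.prop.card_cubes_le h5 hb hc hbc
    have hcoset := cosetDeficit_le_card_add_card_cubes hsq
    zify at hcubes
    nlinarith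

theorem mul_sum_deficit_le (hA : Maximal (IsElementaryAbelian p) A) (h5 : 5 ≤ p) :
    p * ∑ y : G, deficit y ≤
      (p + zmodRothNumber p) * (Nat.card G - Nat.card (normalizer (A : Set G))) +
        p * normalizerDeficit A := by
  classical
  set N := normalizer (A : Set G)
  have hcard : (#{y | y ∉ N} : ℤ) = Nat.card G - Nat.card N := by
    have hsplit := card_filter_add_card_filter_not (s := (univ : Finset G)) (· ∈ N)
    rw [card_univ, ← Nat.card_eq_fintype_card, ← Fintype.card_subtype,
      ← Nat.card_eq_fintype_card] at hsplit
    lia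
  have houter : p * ∑ y with y ∉ N, deficit y ≤
      (p + zmodRothNumber p) * (Nat.card G - Nat.card N) := by
    have hpos : (0 : ℤ) < Nat.card A := mod_cast Nat.card_pos
    have hstable : ∀ a ∈ A, ∀ y, a * y ∉ N ↔ y ∉ N := fun a ha y =>
      not_congr (N.mul_mem_cancel_left (Subgroup.le_normalizer ha))
    have hsum := sum_le_card_nsmul {y | y ∉ N} (fun y => p * cosetDeficit A y)
      ((p + zmodRothNumber p) * Nat.card A) fun y hy =>
        mul_cosetDeficit_le_of_notMem_normalizer hA h5 (mem_filter.1 hy).2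
    rw [← mul_sum, sum_cosetDeficit (P := (· ∉ N)) hstable, nsmul_eq_mul, hcard] at hsum
    exact le_of_mul_le_mul_left (by linarith) hpos
  have hsplit := sum_filter_add_sum_filter_not univ (· ∈ N) (deficit : G → ℤ)
  rw [← hsplit, ← normalizerDeficit]
  linarith

end CosetBounds

section NormalizerBounds

open Subgroup (normalizer centralizer)

variable {G : Type*} [Group G]

theorem pow_card_sub_one_mem_centralizer {p : ℕ} [Fact p.Prime] {A : Subgroup G}
    (hcard : Nat.card A = p) {y : G} (hy : y ∈ normalizer (A : Set G)) :
    y ^ (p - 1) ∈ centralizer (A : Set G) := by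
  have := isCyclic_of_prime_card hcard
  have : Finite A := Nat.finite_of_card_ne_zero (by rw [hcard]; exact NeZero.ne p)
  have hker : (⟨y, hy⟩ : normalizer (A : Set G)) ^ (p - 1) ∈ A.normalizerMonoidHom.ker := by
    rw [MonoidHom.mem_ker, map_pow, ← Nat.totient_prime Fact.out, ← hcard, ← IsCyclic.card_mulAut,
      pow_card_eq_one']
  rwa [Subgroup.normalizerMonoidHom_ker, Subgroup.mem_subgroupOf] at hker

theorem card_normalizer_le_mul_card_centralizer {p : ℕ} [Fact p.Prime] {A : Subgroup G}
    (hcard : Nat.card A = p) :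
    Nat.card (normalizer (A : Set G)) ≤ (p - 1) * Nat.card (centralizer (A : Set G)) := by
  have := isCyclic_of_prime_card hcard
  have : Finite A := Nat.finite_of_card_ne_zero (by rw [hcard]; exact NeZero.ne p)
  have hindex : A.normalizerMonoidHom.ker.index ≤ p - 1 := by
    rw [Subgroup.index_ker, ← Nat.totient_prime Fact.out, ← hcard, ← IsCyclic.card_mulAut]
    exact Nat.card_le_card_of_injective _ Subtype.val_injective
  have hker : Nat.card A.normalizerMonoidHom.ker = Nat.card (centralizer (A : Set G)) := by
    rw [Subgroup.normalizerMonoidHom_ker]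
    exact Nat.card_congr
      (Subgroup.subgroupOfEquivOfLe (Subgroup.centralizer_le_normalizer _)).toEquiv
  rw [← A.normalizerMonoidHom.ker.index_mul_card, hker]
  exact Nat.mul_le_mul_right _ hindex

theorem mem_centralizer_or_inverts_of_sq_eq_one {p : ℕ} [Fact p.Prime] {A : Subgroup G}
    (hcard : Nat.card A = p) {y : G} (hy : y ∈ normalizer (A : Set G)) (hsq : y ^ 2 = 1) :
    y ∈ centralizer (A : Set G) ∨ Inverts A y := by
  have := isCyclic_of_prime_card hcard
  have hcomm (a b : A) : Commute (a : G) b := congrArg Subtype.val (mul_comm' a b)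
  by_cases hinv : ∀ a ∈ A, a * (y * a * y⁻¹) = 1
  · exact Or.inr fun a ha => (inv_eq_of_mul_eq_one_right (hinv a ha)).symm
  push Not at hinv
  obtain ⟨a, ha, hne⟩ := hinv
  have haconj : y * a * y⁻¹ ∈ A := (Subgroup.mem_normalizer_iff.1 hy a).1 ha
  have hfixed : Commute y (a * (y * a * y⁻¹)) := by
    have hyinv : y⁻¹ = y := inv_eq_of_mul_eq_one_right (by rw [← sq, hsq])
    have hconj : y * (a * (y * a * y⁻¹)) * y⁻¹ = y * a * y⁻¹ * a := by
      simp [hyinv, mul_assoc, mul_eq_one_iff_eq_inv.2 hyinv.symm]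
    rw [commute_iff_eq, ← mul_inv_eq_iff_eq_mul, hconj]
    exact hcomm ⟨_, haconj⟩ ⟨a, ha⟩
  refine Or.inl (Subgroup.mem_centralizer_iff.2 fun b hb => ?_)
  obtain ⟨k, hk⟩ := mem_zpowers_of_prime_card hcard (g := ⟨_, A.mul_mem ha haconj⟩)
    (g' := ⟨b, hb⟩) fun h => hne (congrArg Subtype.val h)
  have hbpow : (a * (y * a * y⁻¹)) ^ k = b := congrArg Subtype.val hk
  exact hbpow ▸ (hfixed.zpow_right k).symm

variable [Fintype G] {p : ℕ} [hp : Fact p.Prime] {A : Subgroup G}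

theorem IsElementaryAbelian.card_mul_normalizerDeficit_le (hA : IsElementaryAbelian p A)
    (hp2 : p ≠ 2) (hbot : A ≠ ⊥) {α β : ℤ}
    (hα : ∀ y ∈ centralizer (A : Set G), cosetDeficit A y ≤ α)
    (hβ : ∀ y ∈ normalizer (A : Set G), y ∉ centralizer (A : Set G) → ¬ Inverts A y →
      cosetDeficit A y ≤ β) :
    Nat.card A * normalizerDeficit A ≤
      α * Nat.card (centralizer (A : Set G)) + 3 * Nat.card A * Nat.card {y // Inverts A y} +
        β * (Nat.card (normalizer (A : Set G)) - Nat.card (centralizer (A : Set G)) -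
          Nat.card {y // Inverts A y}) := by
  classical
  set N := normalizer (A : Set G)
  set C := centralizer (A : Set G)
  have hCN : ∀ y, y ∈ C → y ∈ ({y | y ∈ N} : Finset G) := fun y hy => by
    simpa using Subgroup.centralizer_le_normalizer _ hy
  have hVN : ∀ y, Inverts A y → y ∈ ({y | y ∈ N} : Finset G) := fun y hy => by
    simpa using hy.mem_normalizer
  have hstable : ∀ a ∈ A, ∀ y, a * y ∈ N ↔ y ∈ N := fun a ha y =>
    N.mul_mem_cancel_left (Subgroup.le_normalizer ha)
  have hpoint (y : G) (hy : y ∈ N) : cosetDeficit A y ≤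
      β + ((if y ∈ C then α - β else 0) + if Inverts A y then 3 * Nat.card A - β else 0) := by
    by_cases hyV : Inverts A y
    · have hyC : y ∉ C := hyV.notMem_centralizer hA hp2 hbot
      have hyA : y ∉ A := fun h => hyC (hA.le_centralizer h)
      simpa [hyV, hyC] using cosetDeficit_le_three_mul_card hyA
    · by_cases hyC : y ∈ C
      · simpa [hyV, hyC] using hα y hyC
      · simpa [hyV, hyC] using hβ y hy hyC hyV
  have hsum := sum_le_sum fun y (hy : y ∈ ({y | y ∈ N} : Finset G)) =>
    hpoint y (mem_filter.1 hy).2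
  rw [sum_cosetDeficit hstable, sum_add_distrib, sum_add_distrib, sum_ite_eq_mul_card hCN,
    sum_ite_eq_mul_card hVN, sum_const, nsmul_eq_mul, ← Fintype.card_subtype,
    ← Nat.card_eq_fintype_card] at hsum
  rw [normalizerDeficit]
  linarith

theorem IsElementaryAbelian.normalizerDeficit_le (hA : IsElementaryAbelian p A) (h5 : 5 ≤ p)
    (hbot : A ≠ ⊥) : normalizerDeficit A ≤ 2 * Nat.card (normalizer (A : Set G)) := by
  have hpos : (0 : ℤ) < Nat.card A := mod_cast Nat.card_pos
  have hcard : (5 : ℤ) ≤ Nat.card A := by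
    obtain ⟨a, ha, h1⟩ := A.bot_or_exists_ne_one.resolve_left hbot
    have := Nat.le_of_dvd Nat.card_pos (A.orderOf_dvd_natCard ha)
    rw [hA.orderOf_eq ha h1] at this
    lia
  have hbound := hA.card_mul_normalizerDeficit_le (by lia) hbot (α := Nat.card A)
    (fun y hy => (hA.cosetDeficit_le_of_mem_centralizer hy).trans (by nlinarith))
    (fun y _ hyC hyV => hA.cosetDeficit_le_two_mul_card h5 hyC hyV)
  have hinverts : (Nat.card {y // Inverts A y} : ℤ) ≤ Nat.card (centralizer (A : Set G)) :=
    mod_cast card_inverts_le A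
  refine le_of_mul_le_mul_left (hbound.trans ?_) hpos
  nlinarith

theorem IsElementaryAbelian.normalizerDeficit_le_of_card_eq_five (hA : IsElementaryAbelian 5 A)
    (hcard : Nat.card A = 5) :
    10 * normalizerDeficit A ≤ 19 * Nat.card (normalizer (A : Set G)) := by
  have : Fact (Nat.Prime 5) := ⟨Nat.prime_five⟩
  have hbot : A ≠ ⊥ := by rintro rfl; simp at hcard
  have hother : ∀ y ∈ normalizer (A : Set G), y ∉ centralizer (A : Set G) → ¬ Inverts A y →
      deficit y ≤ 1 := by
    intro y hy hyC hyV
    refine deficit_le_one (fun hsq => ?_) fun hcube => hyC ?_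
    · exact (mem_centralizer_or_inverts_of_sq_eq_one hcard hy hsq).elim hyC hyV
    · have := pow_card_sub_one_mem_centralizer hcard hy
      rwa [pow_succ, hcube, one_mul] at this
  have hβ : ∀ y ∈ normalizer (A : Set G), y ∉ centralizer (A : Set G) → ¬ Inverts A y →
      cosetDeficit A y ≤ 1 * Nat.card A := fun y hy hyC hyV =>
    cosetDeficit_le_mul_card fun a ha => hother _
      (Subgroup.mul_mem _ (Subgroup.le_normalizer ha) hy)
      (fun h => hyC ((Subgroup.mul_mem_cancel_left _ (hA.le_centralizer ha)).1 h))
      (fun h => hyV (hA.inverts_of_inverts_mul ha h))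
  have hbound := hA.card_mul_normalizerDeficit_le (by norm_num) hbot
    (fun y hy => hA.cosetDeficit_le_of_mem_centralizer hy) hβ
  have hinverts := card_inverts_le A
  have hle := card_centralizer_add_card_inverts_le hA (by norm_num) hbot
  rw [hcard] at hbound
  zify at hinverts hle
  push_cast at hbound
  linarith

theorem IsElementaryAbelian.normalizerDeficit_le_of_card_eq_seven (hA : IsElementaryAbelian 7 A)
    (hcard : Nat.card A = 7) :
    14 * normalizerDeficit A ≤ 23 * Nat.card (normalizer (A : Set G)) := by
  have : Fact (Nat.Prime 7) := ⟨Nat.prime_seven⟩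
  have hbot : A ≠ ⊥ := by rintro rfl; simp at hcard
  have hbound := hA.card_mul_normalizerDeficit_le (by norm_num) hbot
    (fun y hy => hA.cosetDeficit_le_of_mem_centralizer hy)
    (fun y _ hyC hyV => hA.cosetDeficit_le_two_mul_card (by norm_num) hyC hyV)
  have hinverts := card_inverts_le A
  have hindex := card_normalizer_le_mul_card_centralizer hcard
  rw [hcard] at hbound
  zify at hinverts hindex
  push_cast at hbound hindex
  linarith

end NormalizerBounds

section JustNonsolvable

open Subgroup (normalizer centralizer)

/-- A just-nonsolvable group: a nonsolvable group all of whose proper quotients are solvable. A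
counterexample of minimal order to the main theorem is of this kind. -/
structure IsJustNonsolvable (G : Type*) [Group G] : Prop where
  not_isSolvable : ¬ Group.IsSolvable G
  isSolvable_quotient : ∀ (M : Subgroup G) [M.Normal], M ≠ ⊥ → Group.IsSolvable (G ⧸ M)

variable {G : Type*} [Group G] {p : ℕ}

theorem characteristic_iInf_sylow :
    (⨅ P : Sylow p G, (P : Subgroup G)).Characteristic := by
  refine Subgroup.characteristic_iff_map_le.2 fun φ => le_iInf fun P => ?_
  have hle : (⨅ Q : Sylow p G, (Q : Subgroup G)) ≤ ((φ⁻¹ : MulAut G) • P : Sylow p G) :=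
    iInf_le _ _
  rintro _ ⟨x, hx, rfl⟩
  obtain ⟨y, hy, rfl⟩ := hle hx
  have hφ : φ ((φ⁻¹ : MulAut G) y) = y := φ.apply_symm_apply y
  exact hφ.symm ▸ hy

theorem le_centralizer_of_inf_eq_bot {A K : Subgroup G} [K.Normal]
    (hK : K ≤ normalizer (A : Set G)) (hAK : A ⊓ K = ⊥) : A ≤ centralizer (K : Set G) := by
  refine Subgroup.commutator_eq_bot_iff_le_centralizer.1 (le_bot_iff.1 (hAK ▸ le_inf ?_ ?_))
  · refine Subgroup.commutator_le.2 fun a ha k hk => ?_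
    rw [commutatorElement_def, mul_assoc, mul_assoc, ← mul_assoc k]
    exact A.mul_mem ha ((Subgroup.mem_normalizer_iff.1 (hK hk) _).1 (A.inv_mem ha))
  · exact Subgroup.commutator_le_right A K

namespace IsJustNonsolvable

theorem eq_bot_of_isSolvable (hG : IsJustNonsolvable G) (M : Subgroup G) [M.Normal]
    (hM : Group.IsSolvable M) : M = ⊥ :=
  by_contra fun hne => hG.not_isSolvable <|
    (Group.isSolvable_iff_subgroup_quotient M).2 ⟨hM, hG.isSolvable_quotient M hne⟩

theorem eq_bot_of_inf_eq_bot (hG : IsJustNonsolvable G) {M N : Subgroup G} [M.Normal] [N.Normal]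
    (hM : M ≠ ⊥) (hMN : M ⊓ N = ⊥) : N = ⊥ := by
  by_contra hN
  have := hG.isSolvable_quotient M hM
  have := hG.isSolvable_quotient N hN
  refine hG.not_isSolvable <| Group.isSolvable_of_isSolvable_injective
    (f := (QuotientGroup.mk' M).prod (QuotientGroup.mk' N)) ?_
  rw [← MonoidHom.ker_eq_bot_iff, MonoidHom.ker_prod]
  simpa using hMN

theorem centralizer_eq_bot (hG : IsJustNonsolvable G) {K : Subgroup G} [K.Normal] (hK : K ≠ ⊥) :
    centralizer (K : Set G) = ⊥ :=
  hG.eq_bot_of_inf_eq_bot hK <| hG.eq_bot_of_isSolvable _ <|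
    Group.isSolvable_of_comm fun a b => Subtype.ext (b.2.2 a a.2.1)

theorem iInf_sylow_eq_bot [Finite G] [Fact p.Prime] (hG : IsJustNonsolvable G) (K : Subgroup G)
    [K.Normal] : (⨅ P : Sylow p K, (P : Subgroup K)) = ⊥ := by
  have := characteristic_iInf_sylow (G := K) (p := p)
  have : ((⨅ P : Sylow p K, (P : Subgroup K)).map K.subtype).Normal :=
    ConjAct.normal_of_characteristic_of_normal
  obtain ⟨P⟩ : Nonempty (Sylow p K) := inferInstance
  have := ((P.isPGroup'.to_le (iInf_le _ P)).map K.subtype).isNilpotent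
  exact (Subgroup.map_eq_bot_iff_of_injective _ K.subtype_injective).1
    (hG.eq_bot_of_isSolvable _ inferInstance)

theorem inf_eq_bot_of_le_normalizer [Finite G] [Fact p.Prime] (hG : IsJustNonsolvable G)
    {A K : Subgroup G} [K.Normal] (hA : IsPGroup p A) (hK : K ≤ normalizer (A : Set G)) :
    A ⊓ K = ⊥ := by
  have : (A.subgroupOf K).Normal := Subgroup.normal_subgroupOf_of_le_normalizer hK
  have hAK : IsPGroup p (A.subgroupOf K) := hA.comap_of_injective K.subtype K.subtype_injective
  have hle : A.subgroupOf K ≤ ⨅ P : Sylow p K, (P : Subgroup K) :=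
    le_iInf fun P => hAK.le_sylow_of_normal P
  rw [hG.iInf_sylow_eq_bot, le_bot_iff, Subgroup.subgroupOf_eq_bot] at hle
  exact hle.eq_bot

theorem normalCore_normalizer_eq_bot [Finite G] [Fact p.Prime] (hG : IsJustNonsolvable G)
    {A : Subgroup G} (hA : IsPGroup p A) (hbot : A ≠ ⊥) :
    (normalizer (A : Set G)).normalCore = ⊥ := by
  by_contra hne
  have hle := (normalizer (A : Set G)).normalCore_le
  have hcent := le_centralizer_of_inf_eq_bot hle (hG.inf_eq_bot_of_le_normalizer hA hle)
  exact hbot (le_bot_iff.1 (hG.centralizer_eq_bot hne ▸ hcent))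

end IsJustNonsolvable

variable [Finite G]

theorem card_dvd_factorial_index_of_normalCore_eq_bot {K : Subgroup G} (hK : K.normalCore = ⊥) :
    Nat.card G ∣ K.index.factorial := by
  rw [Subgroup.normalCore_eq_ker, MonoidHom.ker_eq_bot_iff] at hK
  exact Nat.card_perm (α := G ⧸ K) ▸ Subgroup.card_dvd_of_injective _ hK

theorem index_normalizer_modEq_one [hp : Fact p.Prime] {A : Subgroup G} (hA : Nat.card A = p)
    (hsq : ¬ p ^ 2 ∣ Nat.card G) : (normalizer (A : Set G)).index ≡ 1 [MOD p] := by
  have hG : Nat.card G ≠ 0 := Nat.card_pos.ne'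
  have hdvd : p ∣ Nat.card G := hA ▸ A.card_subgroup_dvd_card
  have hfac : (Nat.card G).factorization p = 1 := by
    rw [hp.1.pow_dvd_iff_le_factorization hG] at hsq
    have := (hp.1.dvd_iff_one_le_factorization hG).1 hdvd
    lia
  let P : Sylow p G := Sylow.ofCard A (by rw [hfac, hA, pow_one])
  exact P.card_eq_index_normalizer ▸ card_sylow_modEq_one p G

theorem exists_maximal_isElementaryAbelian [hp : Fact p.Prime] (hdvd : p ∣ Nat.card G) :
    ∃ A : Subgroup G, Maximal (IsElementaryAbelian p) A ∧ A ≠ ⊥ := by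
  obtain ⟨x, hx⟩ := exists_prime_orderOf_dvd_card' p hdvd
  have hclosure : IsElementaryAbelian p (Subgroup.closure {x}) :=
    isElementaryAbelian_closure (by simp) (by simp [← hx, pow_orderOf_eq_one])
  obtain ⟨A, hle, hA⟩ := Finite.exists_le_maximal hclosure
  refine ⟨A, hA, ?_⟩
  rintro rfl
  have hx1 : x = 1 := Subgroup.mem_bot.1 (hle (Subgroup.subset_closure rfl))
  exact hp.1.ne_one (by rw [← hx, hx1, orderOf_one])

theorem card_quotient_lt {M : Subgroup G} (hM : M ≠ ⊥) : Nat.card (G ⧸ M) < Nat.card G := by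
  rw [M.card_eq_card_quotient_mul_card_subgroup]
  exact lt_mul_of_one_lt_right Nat.card_pos (M.one_lt_card_iff_ne_bot.2 hM)

end JustNonsolvable

section MinimalCounterexample

theorem not_sq_dvd_factorial_of_lt_two_mul {p n : ℕ} (hp : p.Prime) (hn : n < 2 * p) :
    ¬ p ^ 2 ∣ n.factorial := by
  have hlog : Nat.log p n < 2 := Nat.log_lt_of_lt_pow' two_ne_zero (by nlinarith [hp.two_le])
  rw [hp.pow_dvd_factorial_iff hlog]
  have : n / p < 2 := Nat.div_lt_of_lt_mul (by lia)
  simpa using this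

theorem avgOrder_quotient_le {G : Type*} [Group G] [Fintype G] (M : Subgroup G) [M.Normal]
    [Fintype (G ⧸ M)] : avgOrder (G ⧸ M) ≤ avgOrder G := by
  classical
  have hfiber (q : G ⧸ M) : #{x : G | QuotientGroup.mk' M x = q} = Nat.card M := by
    have h := QuotientGroup.card_preimage_mk M {q}
    rw [Nat.card_unique (α := ({q} : Set (G ⧸ M))), mul_one] at h
    rw [← h, Nat.card_eq_fintype_card, Fintype.card_subtype]
    congr
  have hsum : (∑ q : G ⧸ M, orderOf q) * Nat.card M ≤ ∑ x : G, orderOf x := calc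
    (∑ q : G ⧸ M, orderOf q) * Nat.card M
      = ∑ q : G ⧸ M, ∑ x : G with QuotientGroup.mk' M x = q, orderOf q := by
        simp only [sum_const, hfiber, smul_eq_mul, sum_mul, mul_comm]
    _ = ∑ x : G, orderOf (QuotientGroup.mk' M x) := sum_fiberwise' _ _ _
    _ ≤ ∑ x : G, orderOf x := sum_le_sum fun x _ =>
        Nat.le_of_dvd (orderOf_pos x) (orderOf_map_dvd _ x)
  have hcard : Fintype.card G = Fintype.card (G ⧸ M) * Nat.card M := by
    simpa only [Nat.card_eq_fintype_card] using M.card_eq_card_quotient_mul_card_subgroup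
  have hM : (Nat.card M : ℚ) ≠ 0 := by exact_mod_cast Nat.card_pos.ne'
  rw [avgOrder, avgOrder, ← mul_div_mul_right _ _ hM, hcard, Nat.cast_mul]
  gcongr
  exact_mod_cast hsum

open Subgroup (normalizer)

variable {G : Type*} [Group G] {p : ℕ} [hp : Fact p.Prime] {A : Subgroup G}

theorem IsElementaryAbelian.card_eq_of_not_sq_dvd [Finite G] (hA : IsElementaryAbelian p A)
    (hbot : A ≠ ⊥) (hsq : ¬ p ^ 2 ∣ Nat.card G) : Nat.card A = p := by
  obtain ⟨n, hn⟩ := IsPGroup.iff_card.1 hA.isPGroup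
  have hn2 : n < 2 := by
    by_contra! hle
    exact hsq ((pow_dvd_pow p hle).trans (hn ▸ A.card_subgroup_dvd_card))
  have hn0 : n ≠ 0 := by
    rintro rfl
    exact hbot (Subgroup.card_eq_one.1 hn)
  rw [hn, show n = 1 by lia, pow_one]

theorem IsJustNonsolvable.card_eq_and_index_eq [Finite G] (hG : IsJustNonsolvable G)
    (hA : IsElementaryAbelian p A) (hbot : A ≠ ⊥)
    (hi : (normalizer (A : Set G)).index < 2 * p) :
    Nat.card A = p ∧ (normalizer (A : Set G)).index = p + 1 := by
  have hcore := hG.normalCore_normalizer_eq_bot hA.isPGroup hbot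
  have hdvd := card_dvd_factorial_index_of_normalCore_eq_bot hcore
  have hsq : ¬ p ^ 2 ∣ Nat.card G := fun hsq =>
    not_sq_dvd_factorial_of_lt_two_mul hp.1 hi (hsq.trans hdvd)
  have hcard := hA.card_eq_of_not_sq_dvd hbot hsq
  have hne : (normalizer (A : Set G)).index ≠ 1 := fun h1 => hbot <| by
    rw [Subgroup.index_eq_one.1 h1, Subgroup.normalCore_eq_self] at hcore
    exact le_bot_iff.1 (hcore ▸ le_top)
  have hpos : 0 < (normalizer (A : Set G)).index :=
    Nat.pos_of_ne_zero Subgroup.index_ne_zero_of_finite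
  have hp_dvd : p ∣ (normalizer (A : Set G)).index - 1 :=
    (Nat.modEq_iff_dvd' hpos).1 (index_normalizer_modEq_one hcard hsq).symm
  obtain ⟨k, hk⟩ := hp_dvd
  refine ⟨hcard, ?_⟩
  have hk2 : k < 2 := lt_of_mul_lt_mul_left (a := p) (by lia) p.zero_le
  interval_cases k <;> lia

variable [Fintype G]

theorem card_lt_sum_deficit_of_avgOrder_lt (h : avgOrder G < 211 / 60) :
    89 * (Nat.card G : ℤ) < 60 * ∑ x : G, deficit x := by
  have hcard : (0 : ℚ) < Fintype.card G := by exact_mod_cast Fintype.card_pos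
  rw [avgOrder, div_lt_div_iff₀ hcard (by norm_num)] at h
  have h' : (∑ x : G, (orderOf x : ℤ)) * 60 < 211 * Fintype.card G := by exact_mod_cast h
  simp only [deficit, sum_sub_distrib, sum_const, card_univ, nsmul_eq_mul, Nat.card_eq_fintype_card]
  linarith

theorem index_normalizer_lt_of_avgOrder_lt (h : avgOrder G < 211 / 60)
    (hA : Maximal (IsElementaryAbelian p) A) (h5 : 5 ≤ p) {d m : ℤ} (hd : 0 < d)
    (hm : d * normalizerDeficit A ≤ m * Nat.card (normalizer (A : Set G))) :
    89 * d * p * (normalizer (A : Set G)).index <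
      60 * (d * (p + zmodRothNumber p) * ((normalizer (A : Set G)).index - 1) + p * m) := by
  have hsum := card_lt_sum_deficit_of_avgOrder_lt h
  have hbound := mul_sum_deficit_le hA h5
  have hcard : (Nat.card G : ℤ) =
      (normalizer (A : Set G)).index * Nat.card (normalizer (A : Set G)) := by
    exact_mod_cast (Subgroup.index_mul_card _).symm
  rw [hcard] at hsum hbound
  have hdp : 0 < d * (p : ℤ) := mul_pos hd (by exact_mod_cast hp.1.pos)
  refine lt_of_mul_lt_mul_right (a := (Nat.card (normalizer (A : Set G)) : ℤ)) ?_ (by positivity)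
  have h1 := mul_lt_mul_of_pos_left hsum hdp
  have h2 := mul_le_mul_of_nonneg_left hbound hd.le
  have h3 := mul_le_mul_of_nonneg_left hm (Nat.cast_nonneg (α := ℤ) p)
  linarith

theorem IsJustNonsolvable.le_avgOrder (hG : IsJustNonsolvable G) (h5 : 5 ≤ p)
    (hdvd : p ∣ Nat.card G) : 211 / 60 ≤ avgOrder G := by
  obtain ⟨A, hA, hbot⟩ := exists_maximal_isElementaryAbelian hdvd
  by_contra! h
  have key {d m : ℤ} := index_normalizer_lt_of_avgOrder_lt h hA h5 (d := d) (m := m)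
  have hi := key one_pos (by rw [one_mul]; exact hA.prop.normalizerDeficit_le h5 hbot)
  have hcard_index := hG.card_eq_and_index_eq hA.prop hbot
  by_cases hp5 : p = 5
  · subst hp5
    rw [zmodRothNumber_five] at hi
    obtain ⟨hcard, hindex⟩ := hcard_index (by lia)
    have := key (by norm_num) (hA.prop.normalizerDeficit_le_of_card_eq_five hcard)
    rw [hindex, zmodRothNumber_five] at this
    norm_num at this
  by_cases hp7 : p = 7
  · subst hp7
    rw [zmodRothNumber_seven] at hi
    obtain ⟨hcard, hindex⟩ := hcard_index (by lia)
    have := key (by norm_num) (hA.prop.normalizerDeficit_le_of_card_eq_seven hcard)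
    rw [hindex, zmodRothNumber_seven] at this
    norm_num at this
  have hp11 := eleven_le_of_prime hp.1 h5 hp5 hp7
  have hroth : 19 * (zmodRothNumber p : ℤ) ≤ 8 * p := by
    exact_mod_cast nineteen_mul_zmodRothNumber_le (by lia)
  have hlt : (normalizer (A : Set G)).index < p := by
    by_contra! hle
    have : (p : ℤ) ≤ (normalizer (A : Set G)).index := by exact_mod_cast hle
    nlinarith
  have := hcard_index (by lia)
  lia

end MinimalCounterexample

section AveragesOfRootsOfUnity

variable {ι : Type*} [Fintype ι]

theorem eq_of_sum_eq_card_smul {E : Type*} [NormedAddCommGroup E] [InnerProductSpace ℝ E]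
    {l : ι → E} {a : E} (hl : ∀ j, ‖l j‖ ≤ ‖a‖) (ha : ∑ j, l j = (Fintype.card ι : ℝ) • a)
    (j : ι) : l j = a := by
  have hsum : ∑ j, ‖l j - a‖ ^ 2 ≤ 0 := calc
    ∑ j, ‖l j - a‖ ^ 2 ≤ ∑ j, (2 * ‖a‖ ^ 2 - 2 * inner ℝ (l j) a) := sum_le_sum fun j _ => by
        have := pow_le_pow_left₀ (norm_nonneg _) (hl j) 2
        rw [norm_sub_sq_real]
        linarith
    _ = 0 := by
        rw [sum_sub_distrib, ← mul_sum, ← mul_sum, ← sum_inner, ha, real_inner_smul_left,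
          real_inner_self_eq_norm_sq, sum_const, card_univ, nsmul_eq_mul]
        ring
  have hj : ‖l j - a‖ ^ 2 = 0 :=
    (sum_eq_zero_iff_of_nonneg fun j _ => by positivity).1
      (le_antisymm hsum (by positivity)) j (mem_univ j)
  exact sub_eq_zero.1 (norm_eq_zero.1 (pow_eq_zero_iff two_ne_zero |>.1 hj))

theorem norm_le_one_of_sum_eq_card_mul [Nonempty ι] {l : ι → ℂ} {a : ℂ} (hl : ∀ j, ‖l j‖ = 1)
    (ha : ∑ j, l j = Fintype.card ι * a) : ‖a‖ ≤ 1 := by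
  have hnorm : Fintype.card ι * ‖a‖ ≤ Fintype.card ι * 1 := by
    simpa [ha, hl] using norm_sum_le univ l
  exact le_of_mul_le_mul_left hnorm (by exact_mod_cast Fintype.card_pos)

/- All conjugates of an average of roots of unity are again averages of roots of unity, hence lie in
the closed unit disc, and Kronecker's theorem applies. -/
theorem exists_pow_eq_one_of_sum_eq_card_mul [Nonempty ι] {K : Type*} [Field K] [NumberField K]
    {l : ι → K} {N : ℕ} (hN : N ≠ 0) (hl : ∀ j, l j ^ N = 1) {x : K}
    (hx : ∑ j, l j = Fintype.card ι * x) (hint : IsIntegral ℤ x) (hx0 : x ≠ 0) :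
    ∃ n, 0 < n ∧ x ^ n = 1 := by
  suffices hφ : ∀ φ : K →+* ℂ, ‖φ x‖ ≤ 1 by
    simpa using NumberField.Embeddings.pow_eq_one_of_norm_le_one K ℂ hx0 hint hφ
  intro φ
  refine norm_le_one_of_sum_eq_card_mul (l := fun j => φ (l j)) (fun j => ?_) ?_
  · exact Complex.norm_eq_one_of_pow_eq_one (by rw [← map_pow, hl, map_one]) hN
  · rw [← map_sum, hx, map_mul, map_natCast]

theorem norm_eq_one_of_sum_eq_card_mul [Nonempty ι] {l : ι → ℂ} {N : ℕ} (hN : N ≠ 0)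
    (hl : ∀ j, l j ^ N = 1) {a : ℂ} (ha : ∑ j, l j = Fintype.card ι * a)
    (hint : IsIntegral ℤ a) (ha0 : a ≠ 0) : ‖a‖ = 1 := by
  let K := IntermediateField.adjoin ℚ (Set.range l)
  have : FiniteDimensional ℚ K := IntermediateField.finiteDimensional_adjoin <| by
    rintro _ ⟨j, rfl⟩
    exact IsIntegral.of_pow (Nat.pos_of_ne_zero hN) (by rw [hl j]; exact isIntegral_one)
  have : NumberField K := {}
  have hlK (j : ι) : l j ∈ K := IntermediateField.subset_adjoin ℚ _ ⟨j, rfl⟩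
  have haK : a ∈ K := by
    have hcard : (Fintype.card ι : ℂ) ≠ 0 := by exact_mod_cast Fintype.card_ne_zero
    rw [← mul_div_cancel_left₀ a hcard, ← ha]
    exact K.div_mem (K.sum_mem fun j _ => hlK j) (natCast_mem K _)
  obtain ⟨n, hn, hpow⟩ := exists_pow_eq_one_of_sum_eq_card_mul (K := K) (l := fun j => ⟨l j, hlK j⟩)
    (x := ⟨a, haK⟩) hN (fun j => Subtype.ext (hl j)) (Subtype.ext (by simpa using ha))
    ((isIntegral_algebraMap_iff (algebraMap K ℂ).injective).1 hint)
    (fun h => ha0 (congrArg Subtype.val h))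
  exact Complex.norm_eq_one_of_pow_eq_one (congrArg Subtype.val hpow) hn.ne'

theorem eq_of_isIntegral_of_sum_eq_card_mul {l : ι → ℂ} {N : ℕ} (hN : N ≠ 0)
    (hl : ∀ j, l j ^ N = 1) {a : ℂ} (ha : ∑ j, l j = Fintype.card ι * a)
    (hint : IsIntegral ℤ a) (ha0 : a ≠ 0) (j : ι) : l j = a := by
  have : Nonempty ι := ⟨j⟩
  refine eq_of_sum_eq_card_smul (fun j => ?_) (by simpa using ha) j
  rw [Complex.norm_eq_one_of_pow_eq_one (hl j) hN,
    norm_eq_one_of_sum_eq_card_mul hN hl ha hint ha0]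

end AveragesOfRootsOfUnity

section MatricesOfFiniteOrder

open Polynomial

variable {K n : Type*} [Field K] [Fintype n] [DecidableEq n] {M : Matrix n n K} {N : ℕ}

theorem pow_eq_one_of_mem_roots_charpoly (hM : M ^ N = 1) {r : K} (hr : r ∈ M.charpoly.roots) :
    r ^ N = 1 := by
  have hspec : r ∈ spectrum K M :=
    Matrix.mem_spectrum_iff_isRoot_charpoly.2 (isRoot_of_mem_roots hr)
  have : Nontrivial (Matrix n n K) := not_subsingleton_iff_nontrivial.1 fun _ => by
    rwa [spectrum.of_subsingleton] at hspec
  have hpow := spectrum.pow_mem_pow M N hspec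
  rwa [hM, spectrum.one_eq, Set.mem_singleton_iff] at hpow

theorem isIntegral_trace_of_pow_eq_one [IsAlgClosed K] (hN : N ≠ 0) (hM : M ^ N = 1) :
    IsIntegral ℤ M.trace := by
  rw [Matrix.trace_eq_sum_roots_charpoly]
  refine IsIntegral.multiset_sum fun r hr => IsIntegral.of_pow (Nat.pos_of_ne_zero hN) ?_
  rw [pow_eq_one_of_mem_roots_charpoly hM hr]
  exact isIntegral_one

theorem eq_algebraMap_of_forall_mem_roots_charpoly [IsAlgClosed K] (hN : (N : K) ≠ 0)
    (hM : M ^ N = 1) {a : K} (ha : ∀ r ∈ M.charpoly.roots, r = a) : M = algebraMap K _ a := by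
  have hsep : (minpoly K M).Separable :=
    (separable_X_pow_sub_C (1 : K) hN one_ne_zero).of_dvd (minpoly.dvd K M (by simp [hM]))
  have hroots : (minpoly K M).roots ≤ {a} := by
    refine (Multiset.le_iff_subset (nodup_roots hsep)).2 fun r hr => Multiset.mem_singleton.2 ?_
    exact ha r ((mem_roots M.charpoly_monic.ne_zero).2
      ((isRoot_of_mem_roots hr).dvd M.minpoly_dvd_charpoly))
  have hdvd : minpoly K M ∣ X - C a := by
    rw [(IsAlgClosed.splits (minpoly K M)).eq_prod_roots_of_monic (minpoly.monic M.isIntegral)]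
    simpa using Multiset.prod_dvd_prod_of_le (Multiset.map_le_map (f := fun b => X - C b) hroots)
  have haeval := aeval_eq_zero_of_dvd_aeval_eq_zero hdvd (minpoly.aeval K M)
  rwa [map_sub, aeval_X, aeval_C, sub_eq_zero] at haeval

theorem eq_algebraMap_of_isIntegral {M : Matrix n n ℂ} (hN : N ≠ 0) (hM : M ^ N = 1) {a : ℂ}
    (ha : M.trace = Fintype.card n * a) (hint : IsIntegral ℤ a) (ha0 : a ≠ 0) :
    M = algebraMap ℂ _ a := by
  refine eq_algebraMap_of_forall_mem_roots_charpoly (Nat.cast_ne_zero.2 hN) hM fun r hr => ?_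
  have hcard : Fintype.card M.charpoly.roots = Fintype.card n := by
    rw [Multiset.card_coe, splits_iff_card_roots.1 (IsAlgClosed.splits _),
      M.charpoly_natDegree_eq_dim]
  have hsum : ∑ j : M.charpoly.roots, j.1 = Fintype.card M.charpoly.roots * a := by
    rw [hcard, ← ha, Matrix.trace_eq_sum_roots_charpoly, sum_eq_multiset_sum, Multiset.map_univ_coe]
  exact eq_of_isIntegral_of_sum_eq_card_mul hN
    (fun j => pow_eq_one_of_mem_roots_charpoly hM Multiset.coe_mem) hsum hint ha0
    ⟨r, ⟨0, Multiset.count_pos.2 hr⟩⟩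

end MatricesOfFiniteOrder

section GroupAlgebra

open MonoidAlgebra

theorem exists_eq_algebraMap_of_mem_center {R A n : Type*} [CommRing R] [Ring A] [Algebra R A]
    [Fintype n] [DecidableEq n] {f : A →ₐ[R] Matrix n n R} (hf : Function.Surjective f) {c : A}
    (hc : c ∈ Set.center A) : ∃ μ : R, f c = algebraMap R _ μ := by
  have hfc : f c ∈ Set.center (Matrix n n R) := by
    refine Semigroup.mem_center_iff.2 (hf.forall.2 fun x => ?_)
    rw [← map_mul, ← map_mul, Semigroup.mem_center_iff.1 hc]
  rw [Matrix.center_eq_range] at hfc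
  obtain ⟨μ, hμ⟩ := hfc
  exact ⟨μ, hμ.symm⟩

variable {G : Type*} [Group G]

theorem mem_center_of_forall_commute_of {R : Type*} [CommRing R] {c : MonoidAlgebra R G}
    (hc : ∀ g : G, of R G g * c = c * of R G g) : c ∈ Set.center (MonoidAlgebra R G) := by
  refine Semigroup.mem_center_iff.2 fun x => ?_
  induction x using MonoidAlgebra.induction_on with
  | of g => exact hc g
  | add x y hx hy => rw [add_mul, mul_add, hx, hy]
  | smul r x hx => rw [smul_mul_assoc, mul_smul_comm, hx]

theorem trace_map_of_eq_of_isConj {R n : Type*} [CommRing R] [Fintype n] [DecidableEq n]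
    (f : MonoidAlgebra R G →ₐ[R] Matrix n n R) {g x : G} (hx : IsConj g x) :
    (f (of R G x)).trace = (f (of R G g)).trace := by
  obtain ⟨c, rfl⟩ := isConj_iff.1 hx
  rw [map_mul, map_mul, Matrix.trace_mul_comm, ← map_mul, ← map_mul, inv_mul_cancel_left]

variable [Fintype G]

open scoped Classical in
/-- The class sum of `g`: the sum in the group algebra `R[G]` of the conjugates of `g`. -/
noncomputable def classSum (R : Type*) [CommRing R] (g : G) : MonoidAlgebra R G :=
  ∑ x with IsConj g x, of R G x

theorem classSum_mem_center (R : Type*) [CommRing R] (g : G) :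
    classSum R g ∈ Set.center (MonoidAlgebra R G) := by
  classical
  refine mem_center_of_forall_commute_of fun h => ?_
  rw [classSum, mul_sum, sum_mul]
  refine sum_equiv (MulAut.conj h).toEquiv (fun x => ?_) fun x _ => ?_
  · have hx : IsConj x (h * x * h⁻¹) := isConj_iff.2 ⟨h, rfl⟩
    simp only [mem_filter, mem_univ, true_and]
    exact ⟨fun hg => hg.trans hx, fun hg => hg.trans hx.symm⟩
  · simp

theorem isIntegral_classSum (R : Type*) [CommRing R] (g : G) : IsIntegral ℤ (classSum R g) := by
  have hint : IsIntegral ℤ (classSum ℤ g) := IsIntegral.of_finite ℤ _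
  simpa [classSum] using hint.map (mapRingHom G (Int.castRingHom R)).toIntAlgHom

theorem trace_mulLeft_of (R : Type*) [CommRing R] [DecidableEq G] (g : G) :
    LinearMap.trace R (MonoidAlgebra R G) (LinearMap.mulLeft R (of R G g)) =
      if g = 1 then (Fintype.card G : R) else 0 := by
  rw [LinearMap.trace_eq_matrix_trace R (MonoidAlgebra.basis G R), Matrix.trace]
  simp only [Matrix.diag_apply, LinearMap.toMatrix_apply]
  split_ifs with hg
  · simp [MonoidAlgebra.basis, hg]
  · simp [MonoidAlgebra.basis, single_mul_single, hg]

end GroupAlgebra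

section RegularRepresentation

open MonoidAlgebra

variable {ι : Type*} [Fintype ι] {n : ι → Type*} [∀ i, Fintype (n i)] [∀ i, DecidableEq (n i)]

theorem trace_mulLeft_pi_matrix {R : Type*} [CommRing R] (a : Π i, Matrix (n i) (n i) R) :
    LinearMap.trace R _ (LinearMap.mulLeft R a) = ∑ i, Fintype.card (n i) * (a i).trace := by
  classical
  have hrepr (i : ι) (j k : n i) :
      (Matrix.stdBasis R (n i) (n i)).repr (a i * Matrix.single j k 1) (j, k) = a i j j := by
    change (a i * (Matrix.single j k 1 : Matrix (n i) (n i) R)) j k = _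
    simp
  rw [LinearMap.trace_eq_matrix_trace R (Pi.basis fun i => Matrix.stdBasis R (n i) (n i)),
    Matrix.trace, Fintype.sum_sigma]
  refine sum_congr rfl fun i _ => ?_
  rw [Fintype.sum_prod_type]
  simp only [Matrix.diag_apply, LinearMap.toMatrix_apply, Pi.basis_repr, Pi.basis_apply,
    LinearMap.mulLeft_apply, Pi.mul_apply, Pi.single_eq_same, Matrix.stdBasis_eq_single, hrepr]
  simp [Matrix.trace, mul_sum]

theorem sum_card_mul_trace_eq_trace_mulLeft {R A : Type*} [CommRing R] [Ring A] [Algebra R A]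
    (e : A ≃ₐ[R] Π i, Matrix (n i) (n i) R) (x : A) :
    ∑ i, Fintype.card (n i) * (e x i).trace = LinearMap.trace R A (LinearMap.mulLeft R x) := by
  rw [← trace_mulLeft_pi_matrix, ← LinearMap.trace_conj' (LinearMap.mulLeft R x) e.toLinearEquiv]
  congr 1
  refine LinearMap.ext fun y => ?_
  rw [LinearEquiv.conj_apply_apply]
  change e x * y = e (x * e.symm y)
  rw [map_mul, AlgEquiv.apply_symm_apply]

variable {K G : Type*} [Field K] [Group G] [Fintype G]

theorem map_sum_of_eq_zero {n : Type*} [Fintype n] [DecidableEq n]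
    {f : MonoidAlgebra K G →ₐ[K] Matrix n n K} (hf : Function.Surjective f) {h : G}
    (hh : f (of K G h) ≠ 1) : f (∑ x : G, of K G x) = 0 := by
  have hleft (g : G) : of K G g * ∑ x : G, of K G x = ∑ x : G, of K G x := by
    simp only [mul_sum, ← map_mul]
    exact Fintype.sum_equiv (Equiv.mulLeft g) _ _ fun x => rfl
  have hright (g : G) : (∑ x : G, of K G x) * of K G g = ∑ x : G, of K G x := by
    simp only [sum_mul, ← map_mul]
    exact Fintype.sum_equiv (Equiv.mulRight g) _ _ fun x => rfl
  obtain ⟨μ, hμ⟩ := exists_eq_algebraMap_of_mem_center hf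
    (mem_center_of_forall_commute_of fun g => (hleft g).trans (hright g).symm)
  have hfix : μ • (f (of K G h) - 1) = 0 := by
    have := congrArg f (hleft h)
    rw [map_mul, hμ, Algebra.algebraMap_eq_smul_one, mul_smul_comm, mul_one] at this
    rw [smul_sub, this, sub_self]
  rw [hμ, (smul_eq_zero.1 hfix).resolve_right (sub_ne_zero.2 hh), map_zero]

/- Compare the traces of the element `∑ x : G, x` on both sides of `e`. -/
open scoped Classical in
theorem sum_card_sq_trivial_eq_one [CharZero K]
    (e : MonoidAlgebra K G ≃ₐ[K] Π i, Matrix (n i) (n i) K) :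
    ∑ i with ∀ h : G, e (of K G h) i = 1, (Fintype.card (n i) : K) ^ 2 = 1 := by
  have hcard : (Fintype.card G : K) ≠ 0 := by exact_mod_cast Fintype.card_ne_zero
  have htrace (i : ι) : Fintype.card (n i) * (e (∑ x : G, of K G x) i).trace =
      if ∀ h : G, e (of K G h) i = 1 then Fintype.card G * (Fintype.card (n i) : K) ^ 2 else 0 := by
    split_ifs with hi
    · simp only [map_sum, Finset.sum_apply, hi, sum_const, card_univ, Matrix.trace_smul,
        Matrix.trace_one]
      ring
    · obtain ⟨h, hh⟩ := not_forall.1 hi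
      let f := (Pi.evalAlgHom K (fun i => Matrix (n i) (n i) K) i).comp e.toAlgHom
      have hf : Function.Surjective f := (Function.surjective_eval i).comp e.surjective
      have hzero : e (∑ x : G, of K G x) i = 0 := map_sum_of_eq_zero (f := f) hf hh
      rw [hzero, Matrix.trace_zero, mul_zero]
  have hsum : ∑ i, Fintype.card (n i) * (e (∑ x : G, of K G x) i).trace = Fintype.card G := by
    simp only [map_sum, Finset.sum_apply, Matrix.trace_sum, mul_sum]
    rw [sum_comm]
    simp only [sum_card_mul_trace_eq_trace_mulLeft, trace_mulLeft_of, sum_ite_eq', mem_univ,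
      if_true]
  simp only [htrace, ← sum_filter, ← mul_sum] at hsum
  exact mul_left_cancel₀ hcard (hsum.trans (mul_one _).symm)

end RegularRepresentation

section PrimePowerClasses

open MonoidAlgebra

theorem one_add_natCast_mul_ne_zero {K : Type*} [Field K] [CharZero K] {m : ℕ} (hm : m ≠ 1) {t : K}
    (ht : IsIntegral ℤ t) : 1 + m * t ≠ 0 := by
  intro h
  have hm0 : (m : K) ≠ 0 := by
    rintro hm0
    simp [hm0] at h
  have htq : t = algebraMap ℚ K (-(m : ℚ)⁻¹) := by
    rw [map_neg, map_inv₀, map_natCast, eq_neg_iff_add_eq_zero]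
    field_simp
    linear_combination h
  rw [htq, isIntegral_algebraMap_iff (algebraMap ℚ K).injective] at ht
  obtain ⟨z, hz⟩ := IsIntegrallyClosed.isIntegral_iff.1 ht
  have hmz : (m : ℤ) * z = -1 := by
    have hzK : (z : K) = t := by rw [htq, ← hz]; simp
    have : (m : K) * z = -1 := by linear_combination h + m * hzK
    exact_mod_cast this
  have hdvd : (m : ℤ) ∣ 1 := ⟨-z, by linarith⟩
  exact hm (Nat.dvd_one.1 (by exact_mod_cast hdvd))

variable {G : Type*} [Group G]

theorem map_of_pow_orderOf {R A : Type*} [CommSemiring R] [Semiring A] [Algebra R A]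
    (f : MonoidAlgebra R G →ₐ[R] A) (g : G) : f (of R G g) ^ orderOf g = 1 := by
  rw [← map_pow, ← map_pow, pow_orderOf_eq_one, map_one, map_one]

theorem injective_map_of_of_isSimpleGroup [IsSimpleGroup G] {R A : Type*} [CommSemiring R]
    [Semiring A] [Algebra R A] {f : MonoidAlgebra R G →ₐ[R] A} (hf : ¬ ∀ h : G, f (of R G h) = 1) :
    Function.Injective fun h : G => f (of R G h) := by
  let ρ : G →* A := (f : MonoidAlgebra R G →* A).comp (of R G)
  refine (MonoidHom.ker_eq_bot_iff ρ).1 (ρ.normal_ker.eq_bot_or_eq_top.resolve_right fun htop => ?_)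
  exact hf fun h => MonoidHom.mem_ker.1 (htop ▸ Subgroup.mem_top h : h ∈ ρ.ker)

variable [Finite G] {n : Type*} [Fintype n] [DecidableEq n]
  {f : MonoidAlgebra ℂ G →ₐ[ℂ] Matrix n n ℂ} {g : G} {q b : ℕ}

theorem exists_isIntegral_card_mul_eq [Nonempty n] (hf : Function.Surjective f) (g : G) :
    ∃ μ : ℂ, IsIntegral ℤ μ ∧
      Fintype.card n * μ = Nat.card {x : G // IsConj g x} * (f (of ℂ G g)).trace := by
  classical
  have := Fintype.ofFinite G
  obtain ⟨μ, hμ⟩ := exists_eq_algebraMap_of_mem_center hf (classSum_mem_center ℂ g)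
  refine ⟨μ, ?_, ?_⟩
  · have hint := (isIntegral_classSum ℂ g).map f.toRingHom.toIntAlgHom
    refine (isIntegral_algebraMap_iff (FaithfulSMul.algebraMap_injective ℂ (Matrix n n ℂ))).1 ?_
    rw [← hμ]
    exact hint
  · calc (Fintype.card n : ℂ) * μ = (f (classSum ℂ g)).trace := by
          rw [hμ, Matrix.algebraMap_eq_diagonal]
          simp [Matrix.trace_diagonal]
      _ = ∑ x with IsConj g x, (f (of ℂ G x)).trace := by
          rw [classSum, map_sum, Matrix.trace_sum]
      _ = _ := by
          rw [sum_congr rfl fun x hx => trace_map_of_eq_of_isConj f (mem_filter.1 hx).2, sum_const,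
            nsmul_eq_mul, Nat.card_eq_fintype_card, Fintype.card_subtype]

theorem isIntegral_trace_map_of (f : MonoidAlgebra ℂ G →ₐ[ℂ] Matrix n n ℂ) (g : G) :
    IsIntegral ℤ (f (of ℂ G g)).trace :=
  isIntegral_trace_of_pow_eq_one (orderOf_pos g).ne' (map_of_pow_orderOf f g)

theorem isIntegral_trace_div_card [Nonempty n] (hf : Function.Surjective f)
    (hcop : (Nat.card {x : G // IsConj g x}).Coprime (Fintype.card n)) :
    IsIntegral ℤ ((f (of ℂ G g)).trace / Fintype.card n) := by
  obtain ⟨μ, hμ, hcard⟩ := exists_isIntegral_card_mul_eq hf g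
  obtain ⟨u, v, huv⟩ := Nat.isCoprime_iff_coprime.2 hcop
  have huv' : (u : ℂ) * Nat.card {x : G // IsConj g x} + v * Fintype.card n = 1 := by
    exact_mod_cast huv
  have hbezout : (f (of ℂ G g)).trace / Fintype.card n = u * μ + v * (f (of ℂ G g)).trace := by
    rw [div_eq_iff (by exact_mod_cast Fintype.card_ne_zero)]
    linear_combination -(f (of ℂ G g)).trace * huv' - u * hcard
  rw [hbezout]
  exact ((isIntegral_algebraMap (x := u)).mul hμ).add
    ((isIntegral_algebraMap (x := v)).mul (isIntegral_trace_map_of f g))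

theorem trace_eq_zero_of_coprime [IsSimpleGroup G] [Nonempty n] (hf : Function.Surjective f)
    (hf1 : ¬ ∀ h : G, f (of ℂ G h) = 1) (hg : g ∉ Subgroup.center G)
    (hcop : (Nat.card {x : G // IsConj g x}).Coprime (Fintype.card n)) :
    (f (of ℂ G g)).trace = 0 := by
  by_contra htr
  have hcard : (Fintype.card n : ℂ) ≠ 0 := by exact_mod_cast Fintype.card_ne_zero
  have hscalar := eq_algebraMap_of_isIntegral (orderOf_pos g).ne' (map_of_pow_orderOf f g)
    (mul_div_cancel₀ _ hcard).symm (isIntegral_trace_div_card hf hcop) (div_ne_zero htr hcard)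
  refine hg (Subgroup.mem_center_iff.2 fun h => injective_map_of_of_isSimpleGroup hf1 ?_)
  change f (of ℂ G (h * g)) = f (of ℂ G (g * h))
  rw [map_mul, map_mul, map_mul, map_mul, hscalar]
  exact (Algebra.commutes _ _).symm

theorem exists_isIntegral_card_mul_trace_eq [IsSimpleGroup G] [Nonempty n]
    (hf : Function.Surjective f) (hf1 : ¬ ∀ h : G, f (of ℂ G h) = 1)
    (hg : g ∉ Subgroup.center G) (hq : q.Prime) (hcl : Nat.card {x : G // IsConj g x} = q ^ b) :
    ∃ t : ℂ, IsIntegral ℤ t ∧ Fintype.card n * (f (of ℂ G g)).trace = q * t := by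
  by_cases hqn : q ∣ Fintype.card n
  · obtain ⟨c, hc⟩ := hqn
    refine ⟨c * (f (of ℂ G g)).trace,
      (isIntegral_algebraMap (x := (c : ℤ))).mul (isIntegral_trace_map_of f g), ?_⟩
    rw [hc]
    push_cast
    ring
  · have hcop : (Nat.card {x : G // IsConj g x}).Coprime (Fintype.card n) := by
      rw [hcl]
      exact (hq.coprime_iff_not_dvd.2 hqn).pow_left b
    exact ⟨0, isIntegral_zero, by rw [trace_eq_zero_of_coprime hf hf1 hg hcop]; simp⟩

/- If `g` were not central, column orthogonality `∑ i, dᵢ * χᵢ g = 0` would read `1 + q * t = 0` for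
an algebraic integer `t`. -/
theorem mem_center_of_card_isConj_eq_prime_pow [IsSimpleGroup G] (hq : q.Prime)
    (hcl : Nat.card {x : G // IsConj g x} = q ^ b) : g ∈ Subgroup.center G := by
  classical
  have := Fintype.ofFinite G
  by_contra hg
  have hg1 : g ≠ 1 := fun h => hg (h ▸ Subgroup.one_mem _)
  obtain ⟨r, d, hd, ⟨e⟩⟩ :=
    IsSemisimpleRing.exists_algEquiv_pi_matrix_of_isAlgClosed ℂ (MonoidAlgebra ℂ G)
  have hnontrivial (i : Fin r) (hi : ¬ ∀ h : G, e (of ℂ G h) i = 1) : ∃ t : ℂ, IsIntegral ℤ t ∧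
      Fintype.card (Fin (d i)) * (e (of ℂ G g) i).trace = q * t :=
    have := hd i
    exists_isIntegral_card_mul_trace_eq
      (f := (Pi.evalAlgHom ℂ (fun i => Matrix (Fin (d i)) (Fin (d i)) ℂ) i).comp e.toAlgHom)
      ((Function.surjective_eval i).comp e.surjective) hi hg hq hcl
  choose! t ht htrace using hnontrivial
  have htrivial (i : Fin r) (hi : ∀ h : G, e (of ℂ G h) i = 1) :
      Fintype.card (Fin (d i)) * (e (of ℂ G g) i).trace = (Fintype.card (Fin (d i)) : ℂ) ^ 2 := by
    rw [hi, Matrix.trace_one, sq]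
  have hsum := sum_card_mul_trace_eq_trace_mulLeft e (of ℂ G g)
  rw [trace_mulLeft_of, if_neg hg1, ← sum_filter_add_sum_filter_not univ
      fun i => ∀ h : G, e (of ℂ G h) i = 1,
    sum_congr rfl fun i hi => htrivial i (mem_filter.1 hi).2, sum_card_sq_trivial_eq_one,
    sum_congr rfl fun i hi => htrace i (mem_filter.1 hi).2, ← mul_sum] at hsum
  exact one_add_natCast_mul_ne_zero hq.ne_one
    (IsIntegral.sum _ fun i hi => ht i (mem_filter.1 hi).2) hsum

end PrimePowerClasses

section Burnside

variable {G : Type*} [Group G]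

theorem card_isConj_eq_index_centralizer (g : G) :
    Nat.card {x : G // IsConj g x} = (Subgroup.centralizer {g}).index := by
  have hindex := Subgroup.index_comap_of_surjective (MulAction.stabilizer (ConjAct G) g)
    (f := (ConjAct.toConjAct : G ≃* ConjAct G).toMonoidHom) ConjAct.toConjAct.surjective
  rw [Subgroup.centralizer_eq_comap_stabilizer]
  refine Eq.trans ?_ (hindex.trans (MulAction.index_stabilizer _ _)).symm
  rw [← Nat.card_coe_set_eq]
  exact Nat.card_congr (Equiv.subtypeEquivRight fun x => by
    rw [ConjAct.mem_orbit_conjAct, isConj_comm])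

variable [Finite G] {p q : ℕ}

theorem exists_ne_one_card_isConj_dvd_index [Fact p.Prime] (P : Sylow p G)
    (hp : p ∣ Nat.card G) : ∃ z : G, z ≠ 1 ∧ Nat.card {x : G // IsConj z x} ∣ P.index := by
  have : Nontrivial P := (Subgroup.nontrivial_iff_ne_bot _).2 (P.ne_bot_of_dvd_card hp)
  have := P.2.center_nontrivial
  obtain ⟨⟨z, hz⟩, hz1⟩ := exists_ne (1 : Subgroup.center P)
  refine ⟨z, fun h => hz1 (Subtype.ext (Subtype.ext h)), ?_⟩
  rw [card_isConj_eq_index_centralizer]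
  refine Subgroup.index_dvd_of_le fun x hx => Subgroup.mem_centralizer_singleton_iff.2 ?_
  exact congrArg Subtype.val (Subgroup.mem_center_iff.1 hz ⟨x, hx⟩)

theorem isSolvable_of_isSimpleGroup_of_dvd_card [IsSimpleGroup G] (hp : p.Prime) (hq : q.Prime)
    (hG : (Nat.card G).primeFactors ⊆ {p, q}) (hdvd : p ∣ Nat.card G) : Group.IsSolvable G := by
  have := Fact.mk hp
  obtain ⟨P⟩ : Nonempty (Sylow p G) := inferInstance
  obtain ⟨z, hz1, hz⟩ := exists_ne_one_card_isConj_dvd_index P hdvd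
  have : Nonempty {x : G // IsConj z x} := ⟨⟨z, IsConj.refl z⟩⟩
  have hpow := Nat.eq_prime_pow_of_unique_prime_dvd Nat.card_pos.ne' fun {r} hr hrz => by
    have hmem := hG (Nat.mem_primeFactors_of_ne_zero Nat.card_pos.ne' |>.2
      ⟨hr, (hrz.trans hz).trans P.index_dvd_card⟩)
    have hrp : r ≠ p := by
      rintro rfl
      exact P.not_dvd_index (hrz.trans hz)
    exact (mem_insert.1 hmem).resolve_left hrp |> mem_singleton.1
  have hcenter := mem_center_of_card_isConj_eq_prime_pow hq hpow
  have htop : Subgroup.center G = ⊤ :=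
    (inferInstance : (Subgroup.center G).Normal).eq_bot_or_eq_top.resolve_left fun hbot =>
      hz1 (Subgroup.mem_bot.1 (hbot ▸ hcenter))
  exact Group.isSolvable_of_comm fun a b => Subgroup.mem_center_iff.1 (htop ▸ Subgroup.mem_top b) a

theorem isSolvable_of_isSimpleGroup [IsSimpleGroup G] (hp : p.Prime) (hq : q.Prime)
    (hG : (Nat.card G).primeFactors ⊆ {p, q}) : Group.IsSolvable G := by
  obtain ⟨r, hr, hdvd⟩ := Nat.exists_prime_and_dvd (Finite.one_lt_card (α := G)).ne'
  have hmem := hG (Nat.mem_primeFactors_of_ne_zero Nat.card_pos.ne' |>.2 ⟨hr, hdvd⟩)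
  rcases mem_insert.1 hmem with rfl | hrq
  · exact isSolvable_of_isSimpleGroup_of_dvd_card hp hq hG hdvd
  · rw [mem_singleton.1 hrq] at hdvd
    exact isSolvable_of_isSimpleGroup_of_dvd_card hq hp (pair_comm p q ▸ hG) hdvd

theorem isSolvable_of_primeFactors_card_subset_pair (hp : p.Prime) (hq : q.Prime)
    (hG : (Nat.card G).primeFactors ⊆ {p, q}) : Group.IsSolvable G := by
  induction hn : Nat.card G using Nat.strong_induction_on generalizing G with | _ m ih
  subst hn
  rcases subsingleton_or_nontrivial G with _ | _
  · exact Group.isSolvable_of_comm fun a b => Subsingleton.elim _ _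
  by_cases hsimple : ∀ N : Subgroup G, N.Normal → N = ⊥ ∨ N = ⊤
  · have : IsSimpleGroup G := ⟨hsimple⟩
    exact isSolvable_of_isSimpleGroup hp hq hG
  · push Not at hsimple
    obtain ⟨N, hN, hbot, htop⟩ := hsimple
    have hsub {k : ℕ} (hk : k ∣ Nat.card G) : k.primeFactors ⊆ {p, q} :=
      (Nat.primeFactors_mono hk Nat.card_pos.ne').trans hG
    refine (Group.isSolvable_iff_subgroup_quotient N).2 ⟨?_, ?_⟩
    · exact ih _ (N.card_le_card_group.lt_of_ne fun h => htop (N.eq_top_of_card_eq h))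
        (hsub N.card_subgroup_dvd_card) rfl
    · exact ih _ (card_quotient_lt hbot) (hsub N.card_quotient_dvd_card) rfl

theorem exists_prime_five_le_of_not_isSolvable (hG : ¬ Group.IsSolvable G) :
    ∃ p : ℕ, p.Prime ∧ 5 ≤ p ∧ p ∣ Nat.card G := by
  by_contra! hsmall
  refine hG (isSolvable_of_primeFactors_card_subset_pair Nat.prime_two Nat.prime_three
    fun p hp => ?_)
  have hprime := Nat.prime_of_mem_primeFactors hp
  have hlt : p < 5 := not_le.1 fun h5 => hsmall p hprime h5 (Nat.dvd_of_mem_primeFactors hp)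
  interval_cases p <;> revert hprime <;> decide

end Burnside

end AverageOrder

open AverageOrder in
theorem solvable_of_avgOrder_lt {G : Type*} [Group G] [Fintype G]
    (h : avgOrder G < 211 / 60) : IsSolvable G := by
  induction hn : Nat.card G using Nat.strong_induction_on generalizing G with | _ n ih
  subst hn
  by_contra hns
  have hG : IsJustNonsolvable G := ⟨hns, fun M _ hM => by
    have := Fintype.ofFinite (G ⧸ M)
    exact ih _ (card_quotient_lt hM) ((avgOrder_quotient_le M).trans_lt h) rfl⟩
  obtain ⟨p, hp, h5, hdvd⟩ := exists_prime_five_le_of_not_isSolvable hns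
  have := Fact.mk hp
  exact (hG.le_avgOrder h5 hdvd).not_gt h
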